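/- For every prime power q with q ≡ 1 (mod 4), |σ(q) − 953·2⁻¹⁵·q²| < 2518·q^{3/2} + 2623·q. -/

import Mathlib

open scoped Classical

noncomputable section

/-- The operation of the quasigroup `Q_{a,b}`:
`u*v = u + a(v-u)` if `v-u` is a square, `u*v = u + b(v-u)` otherwise. -/
def qop {F : Type*} [Field F] (a b u v : F) : F :=
  if IsSquare (v - u) then u + a * (v - u) else u + b * (v - u)

/-- The set `Σ(F)` of pairs `(a,b)` with `a ≠ b`, `a,b ∉ {0,1}`, and
`ab` and `(1-a)(1-b)` both squares. -/
def SigSet (F : Type*) [Field F] : Set (F × F) :=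
  {p | p.1 ≠ p.2 ∧ p.1 ≠ 0 ∧ p.1 ≠ 1 ∧ p.2 ≠ 0 ∧ p.2 ≠ 1 ∧
    IsSquare (p.1 * p.2) ∧ IsSquare ((1 - p.1) * (1 - p.2))}

/-- `Q_{a,b}` is maximally nonassociative. -/
def MaxNA {F : Type*} [Field F] (a b : F) : Prop :=
  ∀ u v w : F, qop a b (qop a b u v) w = qop a b u (qop a b v w) → u = v ∧ v = w

/-- `σ(q)`: the number of pairs `(a,b) ∈ Σ` for which `Q_{a,b}` is
maximally nonassociative. -/
def sigmaCount (F : Type*) [Field F] : ℕ :=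
  Set.ncard {p : F × F | p ∈ SigSet F ∧ MaxNA p.1 p.2}

/-!
Translating a triple to middle entry `0` reduces maximal nonassociativity of `Q_{x,y}` to the
absence of nonzero solutions `(u, w)` of `(u * 0) * w = u * (0 * w)`. For each of the sixteen
prescriptions of the square classes of the differences involved, this equation is linear, its
solutions form a line, and one of them has the prescribed classes exactly when some fixed
polynomials in `x, y` have suitable square classes. Hence, for generic `(x, y)`, membership in
`Σ` together with maximal nonassociativity is a Boolean condition on the square classes of `x`,
`1 - x` and fourteen polynomials in `x, y`.

Bounds on quadratic character sums, obtained by Stepanov's method, show that these square classes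
behave like independent fair bits: first the fourteen polynomials, for a fixed `x` outside a small
exceptional set, then `x` and `1 - x`. A Walsh expansion of the Boolean condition turns this into
an asymptotic formula whose leading constant is the proportion of admissible patterns,
`(784 + 784 + 338) / 2 ^ 16 = 953 / 2 ^ 15`.
-/

section StepanovMethod

open Polynomial

variable {F : Type*} [Field F]

/-- A polynomial `f` is a constant times a square. This is the case excluded in the character sum
bound, as the quadratic character of `f x` is then constant off the roots of `f`. -/
def IsConstMulSq (f : F[X]) : Prop :=
  ∃ (v : F) (g : F[X]), f = C v * g ^ 2

lemma eq_zero_of_mul_sq_eq_C_mul_sq {f r s : F[X]} {v : F} (hf : ¬ IsConstMulSq f)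
    (h : f * r ^ 2 = C v * s ^ 2) : r = 0 := by
  by_contra hr
  rcases eq_or_ne v 0 with rfl | hv
  · have hf0 : f = 0 := by simpa [hr] using h
    exact hf ⟨0, 0, by simp [hf0]⟩
  have hdvd : r ^ 2 ∣ s ^ 2 := by
    rw [← (isUnit_C.2 hv.isUnit).dvd_mul_left, ← h]
    exact dvd_mul_left _ _
  obtain ⟨g, rfl⟩ := (UniqueFactorizationMonoid.pow_dvd_pow_iff_dvd two_ne_zero).1 hdvd
  refine hf ⟨v, g, mul_right_cancel₀ (pow_ne_zero 2 hr) ?_⟩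
  rw [h]
  ring

lemma not_isConstMulSq_of_simple_root {K : Type*} [Field K] (φ : F →+* K) {f : F[X]} {β : K}
    (hroot : (f.map φ).eval β = 0) (hsimple : (derivative (f.map φ)).eval β ≠ 0) :
    ¬ IsConstMulSq f := by
  rintro ⟨v, g, rfl⟩
  simp only [Polynomial.map_mul, map_C, Polynomial.map_pow, eval_mul, eval_C, eval_pow,
    mul_eq_zero, pow_eq_zero_iff two_ne_zero] at hroot
  apply hsimple
  rcases hroot with hv | hg <;>
    simp [derivative_mul, derivative_pow, *]

lemma pow_sub_dvd_hasseDeriv (f : F[X]) (e : ℕ) (k : ℕ) (g : F[X]) :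
    f ^ (e - k) ∣ hasseDeriv k (f ^ e * g) := by
  induction e generalizing k g with
  | zero => simp
  | succ e ih =>
    rw [pow_succ', mul_assoc, hasseDeriv_mul]
    refine Finset.dvd_sum fun ⟨i, j⟩ hij ↦ ?_
    rw [Finset.HasAntidiagonal.mem_antidiagonal] at hij
    rcases Nat.eq_zero_or_pos i with rfl | hi
    · obtain rfl : j = k := by omega
      rw [hasseDeriv_zero']
      refine (pow_dvd_pow f (show e + 1 - j ≤ (e - j) + 1 by omega)).trans ?_
      rw [pow_succ']
      exact mul_dvd_mul_left f (ih j g)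
    · refine (pow_dvd_pow f (show e + 1 - k ≤ e - j by omega)).trans ?_
      exact (ih j g).mul_left _

lemma exists_hasseDeriv_eq_pow_mul {f : F[X]} (hf : f ≠ 0) {e k : ℕ} (hk : k ≤ e) (g : F[X]) :
    ∃ h : F[X], hasseDeriv k (f ^ e * g) = f ^ (e - k) * h ∧
      h.natDegree ≤ g.natDegree + k * f.natDegree := by
  obtain ⟨h, hh⟩ := pow_sub_dvd_hasseDeriv f e k g
  refine ⟨h, hh, ?_⟩
  rcases eq_or_ne h 0 with rfl | h0
  · simp
  have hdeg : (e - k) * f.natDegree + h.natDegree ≤ e * f.natDegree + g.natDegree := by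
    rw [← natDegree_pow, ← natDegree_pow, ← natDegree_mul (pow_ne_zero _ hf) h0, ← hh]
    exact (natDegree_hasseDeriv_le _ _).trans ((Nat.sub_le _ _).trans natDegree_mul_le)
  obtain ⟨c, rfl⟩ := Nat.exists_eq_add_of_le hk
  simp only [Nat.add_sub_cancel_left] at hdeg
  nlinarith

lemma mem_degreeLT_succ_iff {f : F[X]} {n : ℕ} : f ∈ degreeLT F (n + 1) ↔ f.natDegree ≤ n := by
  rw [degreeLT_succ_eq_degreeLE, mem_degreeLE, natDegree_le_iff_degree_le]

lemma finrank_degreeLT (n : ℕ) : Module.finrank F (degreeLT F n) = n := by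
  simp [(degreeLTEquiv F n).finrank_eq]

instance finiteDimensional_degreeLT (n : ℕ) : FiniteDimensional F (degreeLT F n) :=
  (degreeLTEquiv F n).symm.finiteDimensional

lemma mul_card_le_natDegree {R : F[X]} (hR : R ≠ 0) {L : ℕ} {S : Finset F}
    (h : ∀ x ∈ S, ∀ k < L, (hasseDeriv k R).eval x = 0) : L * S.card ≤ R.natDegree := by
  have hdvd : ∏ x ∈ S, (X - C x) ^ L ∣ R := by
    refine Finset.prod_dvd_of_coprime (fun x _ y _ hxy ↦
      (pairwise_coprime_X_sub_C Function.injective_id hxy).pow) fun x hx ↦ ?_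
    rw [X_sub_C_pow_dvd_iff, X_pow_dvd_iff, ← taylor_apply]
    intro k hk
    rw [taylor_coeff]
    exact h x hx k hk
  have hdeg := natDegree_le_of_dvd hdvd hR
  rw [natDegree_prod_of_monic _ _ (fun x _ ↦ (monic_X_sub_C x).pow L)] at hdeg
  simpa [mul_comm] using hdeg

/-- Stepanov's auxiliary data are coefficients `r j`, `s j` of degree at most `m`, for `j < J`,
standing for `∑ j, (f ^ L * r j + f ^ (L + M) * s j) * (X - C t) ^ (q * j)`. -/
abbrev AuxCoeffs (F : Type*) [Field F] (J m : ℕ) : Type _ :=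
  Fin J → degreeLT F (m + 1) × degreeLT F (m + 1)

/-- At a point `x` where `f x ^ M = c = ±1` the `k`-th Hasse derivative of Stepanov's auxiliary
polynomial agrees, up to the factor `c`, with this polynomial, whose degree does not grow with the
field. -/
def reducedHasseDeriv (f : F[X]) (t c : F) (L M J m k : ℕ) : AuxCoeffs F J m →ₗ[F] F[X] :=
  ∑ j : Fin J, LinearMap.mulRight F ((X - C t) ^ (j : ℕ)) ∘ₗ
    (LinearMap.mulRight F (f ^ M) ∘ₗ hasseDeriv k ∘ₗ LinearMap.mulLeft F (f ^ L) ∘ₗ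
        (degreeLT F (m + 1)).subtype ∘ₗ LinearMap.fst F _ _ +
      c • hasseDeriv k ∘ₗ LinearMap.mulLeft F (f ^ (L + M)) ∘ₗ
        (degreeLT F (m + 1)).subtype ∘ₗ LinearMap.snd F _ _) ∘ₗ LinearMap.proj j

lemma reducedHasseDeriv_apply (f : F[X]) (t c : F) (L M J m k : ℕ) (v : AuxCoeffs F J m) :
    reducedHasseDeriv f t c L M J m k v = ∑ j : Fin J,
      (hasseDeriv k (f ^ L * ((v j).1 : F[X])) * f ^ M +
        c • hasseDeriv k (f ^ (L + M) * ((v j).2 : F[X]))) * (X - C t) ^ (j : ℕ) := by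
  simp [reducedHasseDeriv]

lemma exists_mul_reducedHasseDeriv_eq {f : F[X]} (hf : f ≠ 0) (t c : F) {L J m k : ℕ} (M : ℕ)
    (hk : k < L) (v : AuxCoeffs F J m) :
    ∃ h ∈ degreeLT F (m + L * f.natDegree + J),
      f ^ k * reducedHasseDeriv f t c L M J m k v = f ^ (L + M) * h := by
  choose h₁ eq₁ deg₁ using fun j ↦
    exists_hasseDeriv_eq_pow_mul hf hk.le ((v j).1 : F[X])
  choose h₂ eq₂ deg₂ using fun j ↦
    exists_hasseDeriv_eq_pow_mul hf (hk.le.trans (Nat.le_add_right L M)) ((v j).2 : F[X])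
  refine ⟨∑ j : Fin J, (h₁ j + c • h₂ j) * (X - C t) ^ (j : ℕ),
    Submodule.sum_mem _ fun j _ ↦ ?_, ?_⟩
  · have hv₁ := mem_degreeLT_succ_iff.1 (v j).1.2
    have hv₂ := mem_degreeLT_succ_iff.1 (v j).2.2
    have hkd : k * f.natDegree ≤ L * f.natDegree := Nat.mul_le_mul_right _ hk.le
    have hdeg : ((h₁ j + c • h₂ j) * (X - C t) ^ (j : ℕ)).natDegree ≤
        m + L * f.natDegree + j := by
      refine natDegree_mul_le.trans (add_le_add ?_ ?_)
      · exact (natDegree_add_le _ _).trans (max_le ((deg₁ j).trans (by omega))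
          ((natDegree_smul_le _ _).trans ((deg₂ j).trans (by omega))))
      · rw [natDegree_pow, natDegree_X_sub_C, mul_one]
    exact degreeLT_mono (show m + L * f.natDegree + j + 1 ≤ _ by omega)
      (mem_degreeLT_succ_iff.2 hdeg)
  · obtain ⟨i, rfl⟩ := Nat.exists_eq_add_of_lt hk
    rw [reducedHasseDeriv_apply, Finset.mul_sum, Finset.mul_sum]
    refine Finset.sum_congr rfl fun j _ ↦ ?_
    rw [eq₁, eq₂, show k + i + 1 - k = i + 1 by omega,
      show k + i + 1 + M - k = i + 1 + M by omega]
    simp only [smul_eq_C_mul]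
    ring

lemma exists_reducedHasseDeriv_eq_zero {f : F[X]} (hf : f ≠ 0) (t c : F) {L M J m : ℕ}
    (hdim : L * (m + L * f.natDegree + J) < 2 * J * (m + 1)) :
    ∃ v : AuxCoeffs F J m, v ≠ 0 ∧ ∀ k < L, reducedHasseDeriv f t c L M J m k v = 0 := by
  let W : Submodule F F[X] :=
    (degreeLT F (m + L * f.natDegree + J)).map (LinearMap.mulLeft F (f ^ (L + M)))
  let T : AuxCoeffs F J m →ₗ[F] (Fin L → W) := LinearMap.pi fun k ↦
    (LinearMap.mulLeft F (f ^ (k : ℕ)) ∘ₗ reducedHasseDeriv f t c L M J m k).codRestrict W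
      fun v ↦ by
        obtain ⟨h, hdeg, heq⟩ := exists_mul_reducedHasseDeriv_eq hf t c M k.2 v
        exact ⟨h, hdeg, heq.symm⟩
  have hW : Module.finrank F W ≤ m + L * f.natDegree + J :=
    (Submodule.finrank_map_le _ _).trans_eq (finrank_degreeLT _)
  have hrank : Module.finrank F (Fin L → W) < Module.finrank F (AuxCoeffs F J m) := by
    simp only [Module.finrank_pi_fintype, Module.finrank_prod, finrank_degreeLT,
      Finset.sum_const, Finset.card_univ, Fintype.card_fin, smul_eq_mul]
    linarith [Nat.mul_le_mul_left L hW]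
  obtain ⟨v, hv, hv0⟩ :=
    (Submodule.ne_bot_iff _).1 (LinearMap.ker_ne_bot_of_finrank_lt (f := T) hrank)
  refine ⟨v, hv0, fun k hk ↦ ?_⟩
  have hTk : f ^ k * reducedHasseDeriv f t c L M J m k v = 0 :=
    congrArg Subtype.val (congrFun (LinearMap.mem_ker.1 hv) ⟨k, hk⟩)
  exact (mul_eq_zero.1 hTk).resolve_left (pow_ne_zero _ hf)

variable [Fintype F]

lemma pow_card_sub_C (f : F[X]) (v : F) :
    f ^ Fintype.card F - C v = (f - C v) ^ Fintype.card F := by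
  obtain ⟨p, _⟩ := CharP.exists F
  obtain ⟨n, hp, hn⟩ := FiniteField.card F p
  have := Fact.mk hp
  rw [hn, sub_pow_char_pow, ← hn, ← C_pow, FiniteField.pow_card]

lemma hasseDeriv_X_sub_C_pow_card (t : F) {k : ℕ} (hk0 : 0 < k) (hk : k < Fintype.card F) :
    hasseDeriv k ((X - C t : F[X]) ^ Fintype.card F) = 0 := by
  obtain ⟨p, _⟩ := CharP.exists F
  obtain ⟨n, hp, hn⟩ := FiniteField.card F p
  have hchoose : p ∣ (Fintype.card F).choose k := by
    rw [hn] at hk ⊢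
    exact hp.dvd_choose_pow hk0.ne' hk.ne
  rw [← pow_card_sub_C, map_sub, hasseDeriv_C _ _ hk0, sub_zero, ← monomial_one_right_eq_X_pow,
    hasseDeriv_monomial, (CharP.cast_eq_zero_iff F p _).2 hchoose]
  simp

lemma hasseDeriv_mul_X_sub_C_pow_card_pow (t : F) {k : ℕ} (hk : k < Fintype.card F) (g : F[X])
    (j : ℕ) :
    hasseDeriv k (g * ((X - C t : F[X]) ^ Fintype.card F) ^ j) =
      hasseDeriv k g * ((X - C t : F[X]) ^ Fintype.card F) ^ j := by
  induction j with
  | zero => simp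
  | succ j ih =>
    rw [pow_succ, ← mul_assoc, hasseDeriv_mul, Finset.sum_eq_single (k, 0)]
    · rw [ih, hasseDeriv_zero', mul_assoc]
    · rintro ⟨i, l⟩ hil hne
      rw [Finset.HasAntidiagonal.mem_antidiagonal] at hil
      have hl : 0 < l := Nat.pos_of_ne_zero fun h ↦ hne (by simp_all)
      rw [hasseDeriv_X_sub_C_pow_card t hl (by omega), mul_zero]
    · simp

lemma eq_zero_of_X_sub_C_pow_card_dvd {f r s : F[X]} {t : F} {M m : ℕ} (hf : ¬ IsConstMulSq f)
    (ht : f.eval t ≠ 0) (hM : 2 * M + 1 = Fintype.card F)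
    (hm : 2 * m + f.natDegree < Fintype.card F) (hr : r.natDegree ≤ m) (hs : s.natDegree ≤ m)
    (hdvd : (X - C t) ^ Fintype.card F ∣ r + f ^ M * s) : r = 0 ∧ s = 0 := by
  have hdvd_frob : (X - C t) ^ Fintype.card F ∣ f ^ Fintype.card F - C (f.eval t) := by
    rw [pow_card_sub_C]
    exact pow_dvd_pow_of_dvd (dvd_iff_isRoot.2 (by simp)) _
  have hdvd_norm : (X - C t) ^ Fintype.card F ∣ f * r ^ 2 - C (f.eval t) * s ^ 2 := by
    convert dvd_add (hdvd.mul_right (f * (r - f ^ M * s))) (hdvd_frob.mul_right (s ^ 2)) using 1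
    rw [← hM]
    ring
  have hnorm : f * r ^ 2 - C (f.eval t) * s ^ 2 = 0 := by
    refine eq_zero_of_dvd_of_natDegree_lt hdvd_norm ?_
    rw [natDegree_pow, natDegree_X_sub_C, mul_one]
    have hr2 := natDegree_pow_le (p := r) (n := 2)
    have hs2 := natDegree_pow_le (p := s) (n := 2)
    refine (natDegree_sub_le _ _).trans_lt (max_lt ?_ ?_)
    · exact natDegree_mul_le.trans_lt (by omega)
    · exact (natDegree_C_mul_le _ _).trans_lt (by omega)
  obtain rfl := eq_zero_of_mul_sq_eq_C_mul_sq hf (sub_eq_zero.1 hnorm)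
  exact ⟨rfl, by simpa [ht] using hnorm⟩

lemma auxCoeffs_eq_zero {f : F[X]} {t : F} {M m : ℕ} (hf : ¬ IsConstMulSq f)
    (ht : f.eval t ≠ 0) (hM : 2 * M + 1 = Fintype.card F)
    (hm : 2 * m + f.natDegree < Fintype.card F) {J : ℕ} (v : AuxCoeffs F J m)
    (h : ∑ j : Fin J, (((v j).1 : F[X]) + f ^ M * ((v j).2 : F[X])) *
      ((X - C t) ^ Fintype.card F) ^ (j : ℕ) = 0) : v = 0 := by
  induction J with
  | zero => exact Subsingleton.elim _ _
  | succ J ih =>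
    rw [Fin.sum_univ_succ] at h
    simp only [Fin.val_zero, pow_zero, mul_one, Fin.val_succ, pow_succ, ← mul_assoc,
      ← Finset.sum_mul] at h
    have hv0 := eq_zero_of_X_sub_C_pow_card_dvd hf ht hM hm
      (mem_degreeLT_succ_iff.1 (v 0).1.2) (mem_degreeLT_succ_iff.1 (v 0).2.2)
      (Dvd.intro_left (-∑ j : Fin J, _) (by linear_combination -h))
    have hsucc := ih (fun j ↦ v j.succ) (by
      simpa [hv0.1, hv0.2, (pow_ne_zero _ (X_sub_C_ne_zero t) :
        (X - C t : F[X]) ^ Fintype.card F ≠ 0)] using h)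
    funext j
    refine Fin.cases ?_ (fun j ↦ congrFun hsucc j) j
    exact Prod.ext (Subtype.ext hv0.1) (Subtype.ext hv0.2)

/-- Stepanov's auxiliary polynomial, a polynomial in `X`, `f ^ M` and `(X - C t) ^ q` which is
divisible by `f ^ L`. -/
def auxPoly (f : F[X]) (t : F) (L M : ℕ) {J m : ℕ} (v : AuxCoeffs F J m) : F[X] :=
  ∑ j : Fin J, (f ^ L * ((v j).1 : F[X]) + f ^ (L + M) * ((v j).2 : F[X])) *
    ((X - C t) ^ Fintype.card F) ^ (j : ℕ)

lemma auxPoly_ne_zero {f : F[X]} {t : F} {M m : ℕ} (hf : ¬ IsConstMulSq f)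
    (ht : f.eval t ≠ 0) (hM : 2 * M + 1 = Fintype.card F)
    (hm : 2 * m + f.natDegree < Fintype.card F) (L : ℕ) {J : ℕ} {v : AuxCoeffs F J m}
    (hv : v ≠ 0) : auxPoly f t L M v ≠ 0 := by
  have hf0 : f ≠ 0 := by
    rintro rfl
    simp at ht
  have hfactor : auxPoly f t L M v = f ^ L * ∑ j : Fin J,
      (((v j).1 : F[X]) + f ^ M * ((v j).2 : F[X])) *
        ((X - C t) ^ Fintype.card F) ^ (j : ℕ) := by
    rw [auxPoly, Finset.mul_sum]
    exact Finset.sum_congr rfl fun j _ ↦ by ring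
  rw [hfactor]
  exact mul_ne_zero (pow_ne_zero _ hf0) (mt (auxCoeffs_eq_zero hf ht hM hm v) hv)

lemma natDegree_auxPoly_le (f : F[X]) (t : F) (L M : ℕ) {J m : ℕ} (v : AuxCoeffs F J m) :
    (auxPoly f t L M v).natDegree ≤ (L + M) * f.natDegree + m + J * Fintype.card F := by
  refine natDegree_sum_le_of_forall_le _ _ fun j _ ↦ ?_
  have hv₁ := mem_degreeLT_succ_iff.1 (v j).1.2
  have hv₂ := mem_degreeLT_succ_iff.1 (v j).2.2
  refine natDegree_mul_le.trans (add_le_add ?_ ?_)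
  · refine (natDegree_add_le _ _).trans (max_le ?_ ?_)
    · refine natDegree_mul_le.trans (add_le_add ?_ hv₁)
      rw [natDegree_pow]
      exact Nat.mul_le_mul_right _ (Nat.le_add_right _ _)
    · refine natDegree_mul_le.trans (add_le_add ?_ hv₂)
      rw [natDegree_pow]
  · rw [← pow_mul, natDegree_pow, natDegree_X_sub_C, mul_one, mul_comm]
    exact Nat.mul_le_mul_right _ j.2.le

lemma eval_hasseDeriv_auxPoly {f : F[X]} {c x : F} (t : F) {L M J m k : ℕ} (hc : c * c = 1)
    (hx : f.eval x ^ M = c) (hk : k < Fintype.card F) (v : AuxCoeffs F J m) :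
    (hasseDeriv k (auxPoly f t L M v)).eval x =
      c * (reducedHasseDeriv f t c L M J m k v).eval x := by
  rw [auxPoly, reducedHasseDeriv_apply, map_sum, eval_finsetSum, eval_finsetSum, Finset.mul_sum]
  refine Finset.sum_congr rfl fun j _ ↦ ?_
  rw [hasseDeriv_mul_X_sub_C_pow_card_pow t hk, map_add]
  simp only [eval_mul, eval_add, eval_pow, eval_sub, eval_X, eval_C, eval_smul, smul_eq_mul,
    FiniteField.pow_card, hx]
  linear_combination (-(eval x (hasseDeriv k (f ^ L * ((v j).1 : F[X]))) +
    eval x (hasseDeriv k (f ^ (L + M) * ((v j).2 : F[X])))) * (x - t) ^ (j : ℕ)) * hc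

lemma mul_card_le_of_forall_eval_pow_eq {f : F[X]} (hf : ¬ IsConstMulSq f) {c t : F}
    (ht : f.eval t ≠ 0) (hc : c * c = 1) {L M m J : ℕ} (hM : 2 * M + 1 = Fintype.card F)
    (hm : 2 * m + f.natDegree < Fintype.card F) (hL : L ≤ Fintype.card F)
    (hdim : L * (m + L * f.natDegree + J) < 2 * J * (m + 1)) {S : Finset F}
    (hS : ∀ x ∈ S, f.eval x ^ M = c) :
    L * S.card ≤ (L + M) * f.natDegree + m + J * Fintype.card F := by
  have hf0 : f ≠ 0 := by
    rintro rfl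
    simp at ht
  obtain ⟨v, hv, hred⟩ := exists_reducedHasseDeriv_eq_zero (M := M) hf0 t c hdim
  refine (mul_card_le_natDegree (auxPoly_ne_zero hf ht hM hm L hv) fun x hx k hk ↦ ?_).trans
    (natDegree_auxPoly_le f t L M v)
  rw [eval_hasseDeriv_auxPoly t hc (hS x hx) (by omega), hred k hk, eval_zero, mul_zero]

lemma card_eval_eq_zero_le {f : F[X]} (hf : f ≠ 0) :
    (Finset.univ.filter fun x : F ↦ f.eval x = 0).card ≤ f.natDegree := by
  have hroots : (Finset.univ.filter fun x : F ↦ f.eval x = 0) = f.roots.toFinset := by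
    ext x
    simp [hf]
  rw [hroots]
  exact (Multiset.toFinset_card_le _).trans (card_roots' f)

lemma exists_stepanov_parameters {q d : ℕ} (hq : (2 * d + 5) ^ 2 ≤ q) :
    ∃ m J : ℕ, 2 * m + d < q ∧ 2 * J ≤ q.sqrt + 2 * d + 5 ∧
      q.sqrt * (m + q.sqrt * d + J) < 2 * J * (m + 1) := by
  have hL : q.sqrt * q.sqrt ≤ q := Nat.sqrt_le q
  have hd : 2 * d + 5 ≤ q.sqrt := Nat.le_sqrt'.2 hq
  have hdq : d < q := by nlinarith
  obtain ⟨m, hm, hm'⟩ : ∃ m, 2 * m + d < q ∧ q ≤ 2 * (m + 1) + d :=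
    ⟨(q - d - 1) / 2, by omega, by omega⟩
  obtain ⟨J, hJ, hJ'⟩ : ∃ J, q.sqrt + 2 * d + 4 ≤ 2 * J ∧ 2 * J ≤ q.sqrt + 2 * d + 5 :=
    ⟨(q.sqrt + 2 * d + 5) / 2, by omega, by omega⟩
  refine ⟨m, J, hm, hJ', ?_⟩
  have hLLd : q.sqrt * q.sqrt * d ≤ q * d := Nat.mul_le_mul_right d hL
  have hLJ : q.sqrt * (2 * J) ≤ q.sqrt * (q.sqrt + 2 * d + 5) := Nat.mul_le_mul_left _ hJ'
  have hLd : q.sqrt * (2 * d + 5) ≤ q.sqrt * q.sqrt := Nat.mul_le_mul_left _ hd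
  have hJm : (q.sqrt + 2 * d + 4) * (m + 1) ≤ 2 * J * (m + 1) := Nat.mul_le_mul_right _ hJ
  have hdm : (d + 2) * q ≤ (d + 2) * (2 * (m + 1) + d) := Nat.mul_le_mul_left _ hm'
  nlinarith

lemma two_mul_card_quadraticChar_eq_le (hF : ringChar F ≠ 2) {f : F[X]}
    (hf : ¬ IsConstMulSq f) (hq : (2 * f.natDegree + 5) ^ 2 ≤ Fintype.card F) {ε : ℤ}
    (hε : ε * ε = 1) :
    2 * (Finset.univ.filter fun x : F ↦ quadraticChar F (f.eval x) = ε).card ≤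
      Fintype.card F + (3 * f.natDegree + 6) * (Fintype.card F).sqrt + 8 * f.natDegree + 13 := by
  set q := Fintype.card F with hq_def
  set d := f.natDegree with hd_def
  set S := Finset.univ.filter fun x : F ↦ quadraticChar F (f.eval x) = ε with hS_def
  have hd : 2 * d + 5 ≤ q.sqrt := Nat.le_sqrt'.2 hq
  have hL : q.sqrt * q.sqrt ≤ q := Nat.sqrt_le q
  have hL' : q < (q.sqrt + 1) * (q.sqrt + 1) := Nat.lt_succ_sqrt q
  have hodd : q % 2 = 1 := FiniteField.odd_card_of_char_ne_two hF
  have hf0 : f ≠ 0 := by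
    rintro rfl
    exact hf ⟨0, 0, by simp⟩
  obtain ⟨t, ht⟩ : ∃ t, f.eval t ≠ 0 := by
    by_contra! hcon
    have hcard := card_eval_eq_zero_le hf0
    rw [Finset.filter_true_of_mem fun x _ ↦ hcon x, Finset.card_univ] at hcard
    nlinarith
  obtain ⟨m, J, hm, hJ, hdim⟩ := exists_stepanov_parameters hq
  have hS : ∀ x ∈ S, f.eval x ^ (q / 2) = (ε : F) := fun x hx ↦ by
    rw [← quadraticChar_eq_pow_of_char_ne_two' hF, (Finset.mem_filter.1 hx).2]
  have hε' : (ε : F) * ε = 1 := by rw [← Int.cast_mul, hε, Int.cast_one]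
  have hstep := mul_card_le_of_forall_eval_pow_eq hf ht hε' (by omega) hm (by nlinarith) hdim hS
  rw [← hq_def, ← hd_def] at hstep
  have hJq : 2 * J * q ≤ (q.sqrt + 2 * d + 5) * q := Nat.mul_le_mul_right _ hJ
  have hMd : (2 * (q / 2) + 1) * d = q * d := by rw [show 2 * (q / 2) + 1 = q by omega]
  refine le_of_mul_le_mul_left (a := q.sqrt) ?_ (by omega)
  nlinarith

lemma one_add_mul_quadraticChar {ε : ℤ} (hε : ε * ε = 1) (y : F) :
    1 + ε * quadraticChar F y =
      2 * (if quadraticChar F y = ε then 1 else 0) + if y = 0 then 1 else 0 := by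
  rcases eq_or_ne y 0 with rfl | hy <;>
    rcases Int.isUnit_iff.1 (IsUnit.of_mul_eq_one _ hε) with rfl | rfl
  · simp
  · simp
  all_goals rcases quadraticChar_dichotomy hy with h | h <;>
    simp [-quadraticChar_apply, h, hy]

/-- A Weil-type bound with a weak constant, obtained by Stepanov's method. -/
theorem abs_sum_quadraticChar_le (hF : ringChar F ≠ 2) {f : F[X]} (hf : ¬ IsConstMulSq f) :
    |∑ x : F, quadraticChar F (f.eval x)| ≤ (3 * f.natDegree + 11) * (Fintype.card F).sqrt := by
  have hL' := Nat.lt_succ_sqrt (Fintype.card F)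
  rcases lt_or_ge (Fintype.card F) ((2 * f.natDegree + 5) ^ 2) with hq | hq
  · have hd : (Fintype.card F).sqrt < 2 * f.natDegree + 5 := Nat.sqrt_lt'.2 hq
    calc |∑ x : F, quadraticChar F (f.eval x)|
        ≤ ∑ x : F, |quadraticChar F (f.eval x)| := Finset.abs_sum_le_sum_abs _ _
      _ ≤ ∑ _x : F, 1 := Finset.sum_le_sum fun x _ ↦ by
          rcases quadraticChar_isQuadratic F (f.eval x) with h | h | h <;> simp [h]
      _ = Fintype.card F := by simp
      _ ≤ _ := by
          norm_cast
          nlinarith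
  have hd : 2 * f.natDegree + 5 ≤ (Fintype.card F).sqrt := Nat.le_sqrt'.2 hq
  have hf0 : f ≠ 0 := by
    rintro rfl
    exact hf ⟨0, 0, by simp⟩
  have hbound : ∀ ε : ℤ, ε * ε = 1 → ε * ∑ x : F, quadraticChar F (f.eval x) ≤
      (3 * f.natDegree + 11) * (Fintype.card F).sqrt := by
    intro ε hε
    have hsum := Finset.sum_congr rfl fun x (_ : x ∈ Finset.univ) ↦
      one_add_mul_quadraticChar hε (f.eval x)
    simp only [Finset.sum_add_distrib, ← Finset.mul_sum, Finset.sum_boole, Finset.sum_const,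
      Finset.card_univ, nsmul_eq_mul, mul_one] at hsum
    have hcard := two_mul_card_quadraticChar_eq_le hF hf hq hε
    have hzero := card_eval_eq_zero_le hf0
    zify at hcard hzero hd
    linarith
  rw [abs_le]
  constructor
  · linarith [hbound (-1) (by norm_num)]
  · linarith [hbound 1 (by norm_num)]

end StepanovMethod

section BooleanCube

variable {ι : Type*} [Fintype ι]

/-- The sign `1` of `true` and `-1` of `false`. -/
def boolSign (e : Bool) : ℝ := if e then 1 else -1

lemma prod_one_add_boolSign_mul (e e' : ι → Bool) :
    ∏ i, (1 + boolSign (e i) * boolSign (e' i)) =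
      if e = e' then (2 : ℝ) ^ Fintype.card ι else 0 := by
  split_ifs with h
  · subst h
    have hsq : ∀ i, 1 + boolSign (e i) * boolSign (e i) = 2 := fun i ↦ by
      cases e i <;> norm_num [boolSign]
    simp [hsq]
  · obtain ⟨i, hi⟩ := Function.ne_iff.1 h
    refine Finset.prod_eq_zero (Finset.mem_univ i) ?_
    cases h₁ : e i <;> cases h₂ : e' i <;> simp_all [boolSign]

variable [DecidableEq ι]

/-- The multilinear extension to `ι → ℝ` of a function on the Boolean cube, whose vertices are
embedded in `ι → ℝ` by `boolSign`. -/
def multilinearExt (Φ : (ι → Bool) → ℝ) (x : ι → ℝ) : ℝ :=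
  ∑ e : ι → Bool, Φ e * ∏ i, (1 + boolSign (e i) * x i) / 2

/-- The unnormalised Walsh–Fourier coefficient of a function on the Boolean cube. -/
def walshCoeff (Φ : (ι → Bool) → ℝ) (T : Finset ι) : ℝ :=
  ∑ e : ι → Bool, Φ e * ∏ i ∈ T, boolSign (e i)

lemma multilinearExt_boolSign (Φ : (ι → Bool) → ℝ) (e : ι → Bool) :
    multilinearExt Φ (fun i ↦ boolSign (e i)) = Φ e := by
  simp [multilinearExt, Finset.prod_div_distrib, prod_one_add_boolSign_mul, ite_div]

lemma sum_prod_one_add_boolSign_mul_div_two (x : ι → ℝ) :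
    ∑ e : ι → Bool, ∏ i, (1 + boolSign (e i) * x i) / 2 = 1 := by
  rw [← Fintype.prod_sum fun i b ↦ (1 + boolSign b * x i) / 2]
  refine Finset.prod_eq_one fun i _ ↦ ?_
  simp only [Fintype.univ_bool, boolSign, Finset.mem_singleton, Bool.true_eq_false,
    not_false_eq_true, Finset.sum_insert, Finset.sum_singleton, if_true, Bool.false_eq_true,
    if_false]
  ring

lemma multilinearExt_mem_Icc {Φ : (ι → Bool) → ℝ} (hΦ : ∀ e, Φ e ∈ Set.Icc 0 1) {x : ι → ℝ}
    (hx : ∀ i, |x i| ≤ 1) : multilinearExt Φ x ∈ Set.Icc 0 1 := by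
  have hweight : ∀ e : ι → Bool, 0 ≤ ∏ i, (1 + boolSign (e i) * x i) / 2 := fun e ↦
    Finset.prod_nonneg fun i _ ↦ by
      have := abs_le.1 (hx i)
      cases e i <;> simp only [boolSign, if_true, Bool.false_eq_true, if_false] <;> linarith
  refine ⟨Finset.sum_nonneg fun e _ ↦ mul_nonneg (hΦ e).1 (hweight e), ?_⟩
  rw [← sum_prod_one_add_boolSign_mul_div_two x]
  exact Finset.sum_le_sum fun e _ ↦ mul_le_of_le_one_left (hweight e) (hΦ e).2

lemma multilinearExt_eq_sum_walshCoeff (Φ : (ι → Bool) → ℝ) (x : ι → ℝ) :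
    multilinearExt Φ x =
      (∑ T : Finset ι, walshCoeff Φ T * ∏ i ∈ T, x i) / 2 ^ Fintype.card ι := by
  simp only [multilinearExt, walshCoeff, Finset.prod_div_distrib, Finset.prod_const,
    Finset.card_univ, Finset.prod_one_add, Finset.powerset_univ, Finset.prod_mul_distrib,
    Finset.sum_mul, Finset.sum_div, Finset.mul_sum]
  rw [Finset.sum_comm]
  exact Finset.sum_congr rfl fun T _ ↦ Finset.sum_congr rfl fun e _ ↦ by ring

lemma sum_walshCoeff_sq (Φ : (ι → Bool) → ℝ) :
    ∑ T : Finset ι, walshCoeff Φ T ^ 2 = 2 ^ Fintype.card ι * ∑ e, Φ e ^ 2 := by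
  have hsq : ∀ T : Finset ι, walshCoeff Φ T ^ 2 = ∑ e : ι → Bool, ∑ e' : ι → Bool,
      Φ e * Φ e' * ∏ i ∈ T, boolSign (e i) * boolSign (e' i) := fun T ↦ by
    rw [walshCoeff, sq, Finset.sum_mul_sum]
    refine Finset.sum_congr rfl fun e _ ↦ Finset.sum_congr rfl fun e' _ ↦ ?_
    rw [Finset.prod_mul_distrib]
    ring
  have horth : ∀ e e' : ι → Bool, ∑ T : Finset ι, ∏ i ∈ T, boolSign (e i) * boolSign (e' i) =
      if e = e' then (2 : ℝ) ^ Fintype.card ι else 0 := fun e e' ↦ by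
    rw [← prod_one_add_boolSign_mul, Finset.prod_one_add, Finset.powerset_univ]
  simp only [hsq]
  rw [Finset.sum_comm, Finset.mul_sum]
  refine Finset.sum_congr rfl fun e _ ↦ ?_
  rw [Finset.sum_comm]
  simp only [← Finset.mul_sum, horth, mul_ite, mul_zero, Finset.sum_ite_eq, Finset.mem_univ,
    if_true]
  ring

lemma sum_abs_walshCoeff_le (Φ : (ι → Bool) → ℝ) :
    ∑ T : Finset ι, |walshCoeff Φ T| ≤ 2 ^ Fintype.card ι * √(∑ e, Φ e ^ 2) := by
  have hcs := sq_sum_le_card_mul_sum_sq (s := (Finset.univ : Finset (Finset ι)))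
    (f := fun T ↦ |walshCoeff Φ T|)
  simp only [sq_abs, sum_walshCoeff_sq, Finset.card_univ, Fintype.card_finset] at hcs
  push_cast at hcs
  refine le_of_sq_le_sq ?_ (by positivity)
  rw [mul_pow, Real.sq_sqrt (Finset.sum_nonneg fun _ _ ↦ sq_nonneg _)]
  linarith

lemma sum_multilinearExt_sub_eq {B : Type*} [Fintype B] (Φ : (ι → Bool) → ℝ) (s : B → ι → ℝ) :
    ∑ b, multilinearExt Φ (s b) - Fintype.card B * ((∑ e, Φ e) / 2 ^ Fintype.card ι) =
      (∑ T ∈ Finset.univ.erase (∅ : Finset ι), walshCoeff Φ T * ∑ b, ∏ i ∈ T, s b i) /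
        2 ^ Fintype.card ι := by
  have hext : ∑ b, multilinearExt Φ (s b) =
      (∑ T : Finset ι, walshCoeff Φ T * ∑ b, ∏ i ∈ T, s b i) / 2 ^ Fintype.card ι := by
    simp only [multilinearExt_eq_sum_walshCoeff, ← Finset.sum_div, Finset.mul_sum]
    rw [Finset.sum_comm]
  rw [hext, ← Finset.add_sum_erase _ _ (Finset.mem_univ (∅ : Finset ι))]
  simp only [walshCoeff, Finset.prod_empty, mul_one, Finset.sum_const, Finset.card_univ,
    nsmul_eq_mul]
  ring

theorem abs_sum_multilinearExt_sub_le {B : Type*} [Fintype B] (Φ : (ι → Bool) → ℝ)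
    {s : B → ι → ℝ} {M : ℝ} (hM₀ : 0 ≤ M)
    (hM : ∀ T : Finset ι, T.Nonempty → |∑ b, ∏ i ∈ T, s b i| ≤ M) :
    |∑ b, multilinearExt Φ (s b) - Fintype.card B * ((∑ e, Φ e) / 2 ^ Fintype.card ι)| ≤
      M * √(∑ e, Φ e ^ 2) := by
  have hp : (0 : ℝ) < 2 ^ Fintype.card ι := by positivity
  rw [sum_multilinearExt_sub_eq, abs_div, abs_of_pos hp, div_le_iff₀ hp]
  calc |∑ T ∈ Finset.univ.erase (∅ : Finset ι), walshCoeff Φ T * ∑ b, ∏ i ∈ T, s b i|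
      ≤ ∑ T ∈ Finset.univ.erase (∅ : Finset ι), |walshCoeff Φ T * ∑ b, ∏ i ∈ T, s b i| :=
        Finset.abs_sum_le_sum_abs _ _
    _ ≤ ∑ T ∈ Finset.univ.erase (∅ : Finset ι), |walshCoeff Φ T| * M := by
        refine Finset.sum_le_sum fun T hT ↦ ?_
        rw [abs_mul]
        exact mul_le_mul_of_nonneg_left
          (hM T (Finset.nonempty_iff_ne_empty.2 (Finset.ne_of_mem_erase hT))) (abs_nonneg _)
    _ ≤ ∑ T : Finset ι, |walshCoeff Φ T| * M :=
        Finset.sum_le_sum_of_subset_of_nonneg (Finset.erase_subset _ _)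
          fun T _ _ ↦ mul_nonneg (abs_nonneg _) hM₀
    _ = M * ∑ T : Finset ι, |walshCoeff Φ T| := by rw [← Finset.sum_mul, mul_comm]
    _ ≤ M * (2 ^ Fintype.card ι * √(∑ e, Φ e ^ 2)) :=
        mul_le_mul_of_nonneg_left (sum_abs_walshCoeff_le Φ) hM₀
    _ = M * √(∑ e, Φ e ^ 2) * 2 ^ Fintype.card ι := by ring

end BooleanCube

section PolynomialSigns

open Polynomial

variable {F ι : Type*} [Field F]

lemma not_isConstMulSq_prod {K : Type*} [Field K] (φ : F →+* K) {g : ι → F[X]}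
    {T : Finset ι} {i : ι} {β : K} (hi : i ∈ T) (hroot : ((g i).map φ).eval β = 0)
    (hsimple : (derivative ((g i).map φ)).eval β ≠ 0)
    (hother : ∀ j, j ≠ i → ((g j).map φ).eval β ≠ 0) : ¬ IsConstMulSq (∏ j ∈ T, g j) := by
  have hmap : (∏ j ∈ T, g j).map φ = (g i).map φ * ∏ j ∈ T.erase i, (g j).map φ := by
    rw [← Finset.mul_prod_erase T g hi, Polynomial.map_mul, Polynomial.map_prod]
  apply not_isConstMulSq_of_simple_root φ (β := β)
  · rw [hmap, eval_mul, hroot, zero_mul]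
  · rw [hmap, derivative_mul, eval_add, eval_mul, eval_mul, hroot, zero_mul, add_zero, eval_prod]
    exact mul_ne_zero hsimple
      (Finset.prod_ne_zero_iff.2 fun j hj ↦ hother j (Finset.ne_of_mem_erase hj))

variable [Fintype F] [Fintype ι]

lemma abs_sum_prod_quadraticChar_le (hF : ringChar F ≠ 2) {g : ι → F[X]} {D : ℕ}
    (hD : ∑ i, (g i).natDegree ≤ D) {T : Finset ι} (hT : ¬ IsConstMulSq (∏ i ∈ T, g i)) :
    |∑ b : F, ∏ i ∈ T, (quadraticChar F ((g i).eval b) : ℝ)| ≤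
      (3 * D + 11) * √(Fintype.card F) := by
  have hdeg : (∏ i ∈ T, g i).natDegree ≤ D :=
    (natDegree_prod_le _ _).trans
      ((Finset.sum_le_sum_of_subset (Finset.subset_univ T)).trans hD)
  calc |∑ b : F, ∏ i ∈ T, (quadraticChar F ((g i).eval b) : ℝ)|
      = ((|∑ b : F, quadraticChar F ((∏ i ∈ T, g i).eval b)| : ℤ) : ℝ) := by
        push_cast [eval_prod, map_prod]
        rfl
    _ ≤ ((3 * (∏ i ∈ T, g i).natDegree + 11) * (Fintype.card F).sqrt : ℤ) :=
        Int.cast_le.2 (abs_sum_quadraticChar_le hF hT)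
    _ ≤ (3 * D + 11) * √(Fintype.card F) := by
        push_cast
        gcongr
        exact Real.nat_sqrt_le_real_sqrt

theorem abs_sum_multilinearExt_quadraticChar_sub_le [DecidableEq ι] (hF : ringChar F ≠ 2)
    {g : ι → F[X]} {D : ℕ} (hD : ∑ i, (g i).natDegree ≤ D)
    (hg : ∀ T : Finset ι, T.Nonempty → ¬ IsConstMulSq (∏ i ∈ T, g i)) (Φ : (ι → Bool) → ℝ) :
    |∑ b : F, multilinearExt Φ (fun i ↦ quadraticChar F ((g i).eval b)) -
        Fintype.card F * ((∑ e, Φ e) / 2 ^ Fintype.card ι)| ≤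
      (3 * D + 11) * √(Fintype.card F) * √(∑ e, Φ e ^ 2) :=
  abs_sum_multilinearExt_sub_le Φ (by positivity) fun T hT ↦
    abs_sum_prod_quadraticChar_le hF hD (hg T hT)

end PolynomialSigns

section CriticalPolynomials

/-- The fourteen polynomials in `a`, `b` whose quadratic characters, together with those of `a` and
`1 - a`, decide whether `Q_{a,b}` is maximally nonassociative. -/
def critPoly {R : Type*} [CommRing R] (a b : R) : Fin 14 → R :=
  ![b,
    1 - b,
    a ^ 2 - 2 * a + b,
    b ^ 2 - 2 * b + a,
    b ^ 2 - a,
    a ^ 2 - b,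
    a - b - a * b + a * b ^ 2,
    b - a - a * b + a ^ 2 * b,
    a - a * b - b ^ 2 + a * b ^ 2,
    b - a * b - a ^ 2 + a ^ 2 * b,
    b - a - a * b,
    a - b - a * b,
    a * b - 2 * b + 1,
    a * b - 2 * a + 1]

/-- The coefficient of `b ^ k` in `critPoly a b i`. -/
def critCoeff {R : Type*} [CommRing R] (a : R) : Fin 14 → Fin 3 → R :=
  ![![0, 1, 0],
    ![1, -1, 0],
    ![a ^ 2 - 2 * a, 1, 0],
    ![a, -2, 1],
    ![-a, 0, 1],
    ![a ^ 2, -1, 0],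
    ![a, -1 - a, a],
    ![-a, 1 - a + a ^ 2, 0],
    ![a, -a, a - 1],
    ![-a ^ 2, 1 - a + a ^ 2, 0],
    ![-a, 1 - a, 0],
    ![a, -1 - a, 0],
    ![1, a - 2, 0],
    ![1 - 2 * a, a, 0]]

/-- The indices of the polynomials `critPoly a b i` which are quadratic in `b`. -/
def quadraticIndices : Finset (Fin 14) := {3, 4, 6, 8}

/-- The resultant of the quadratics with coefficients `p` and `q`, or of the linear polynomials if
`linear` is set (the former resultant vanishes when both leading coefficients do). -/
def quadraticResultant {R : Type*} [CommRing R] (linear : Bool) (p q : Fin 3 → R) : R :=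
  if linear then p 1 * q 0 - p 0 * q 1 else
    (p 2 * q 0 - p 0 * q 2) ^ 2 - (p 2 * q 1 - p 1 * q 2) * (p 1 * q 0 - p 0 * q 1)

/-- The discriminant of `critPoly a b i` with respect to `b` if `i = j`, and the resultant of
`critPoly a b i` and `critPoly a b j` with respect to `b` otherwise. -/
def critElim {R : Type*} [CommRing R] (a : R) (i j : Fin 14) : R :=
  if i = j then discrim (critCoeff a i 2) (critCoeff a i 1) (critCoeff a i 0) else
    quadraticResultant (i ∉ quadraticIndices ∧ j ∉ quadraticIndices) (critCoeff a i) (critCoeff a j)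

section CommRing

variable {R S : Type*} [CommRing R] [CommRing S]

lemma critPoly_eq_sum_critCoeff (a b : R) (i : Fin 14) :
    critPoly a b i = critCoeff a i 2 * (b * b) + critCoeff a i 1 * b + critCoeff a i 0 := by
  fin_cases i <;> simp [critPoly, critCoeff] <;> ring

lemma critCoeff_two_eq_zero (a : R) {i : Fin 14} (hi : i ∉ quadraticIndices) :
    critCoeff a i 2 = 0 := by
  fin_cases i <;> first | rfl | exact absurd (by decide) hi

lemma map_critPoly (φ : R →+* S) (a b : R) (i : Fin 14) :
    φ (critPoly a b i) = critPoly (φ a) (φ b) i := by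
  fin_cases i <;> simp [critPoly, map_ofNat φ]

lemma map_critCoeff (φ : R →+* S) (a : R) (i : Fin 14) (k : Fin 3) :
    φ (critCoeff a i k) = critCoeff (φ a) i k := by
  fin_cases i <;> fin_cases k <;> simp [critCoeff, map_ofNat φ]

lemma map_critElim (φ : R →+* S) (a : R) (i j : Fin 14) :
    φ (critElim a i j) = critElim (φ a) i j := by
  simp only [critElim, quadraticResultant, discrim]
  split_ifs <;> simp [map_critCoeff, map_ofNat φ]

lemma quadraticResultant_eq_zero_of_common_root {linear : Bool} {p q : Fin 3 → R} {x : R}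
    (hlinear : linear → p 2 = 0 ∧ q 2 = 0) (hp : p 2 * (x * x) + p 1 * x + p 0 = 0)
    (hq : q 2 * (x * x) + q 1 * x + q 0 = 0) : quadraticResultant linear p q = 0 := by
  have hv : p 2 * q 0 - p 0 * q 2 = -(p 2 * q 1 - p 1 * q 2) * x := by
    linear_combination p 2 * hq - q 2 * hp
  have hw : p 1 * q 0 - p 0 * q 1 = (p 2 * q 1 - p 1 * q 2) * x ^ 2 := by
    linear_combination p 1 * hq - q 1 * hp
  rw [quadraticResultant]
  split_ifs with h
  · rw [hw, (hlinear h).1, (hlinear h).2]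
    ring
  · rw [hv, hw]
    ring

lemma critPoly_ne_zero_of_critElim_ne_zero {a b : R} {i j : Fin 14} (hij : i ≠ j)
    (h : critElim a i j ≠ 0) (hi : critPoly a b i = 0) : critPoly a b j ≠ 0 := by
  intro hj
  rw [critPoly_eq_sum_critCoeff] at hi hj
  rw [critElim, if_neg hij] at h
  refine h (quadraticResultant_eq_zero_of_common_root (fun hlin ↦ ?_) hi hj)
  have hlin := of_decide_eq_true hlin
  exact ⟨critCoeff_two_eq_zero a hlin.1, critCoeff_two_eq_zero a hlin.2⟩

end CommRing

section Field

open Polynomial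

variable {F : Type*} [Field F]

lemma eval_critPoly (a b : F) (i : Fin 14) : (critPoly (C a) X i).eval b = critPoly a b i := by
  simpa using map_critPoly (evalRingHom b) (C a) X i

lemma eval_derivative_critPoly (a b : F) (i : Fin 14) :
    (derivative (critPoly (C a) X i)).eval b = 2 * critCoeff a i 2 * b + critCoeff a i 1 := by
  have hC : ∀ k, critCoeff (C a) i k = C (critCoeff a i k) := fun k ↦ (map_critCoeff C a i k).symm
  simp only [critPoly_eq_sum_critCoeff, hC, derivative_add, derivative_mul, derivative_C,
    derivative_X, eval_add, eval_mul, eval_C, eval_X, eval_zero, eval_one]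
  ring

lemma eval_derivative_critPoly_ne_zero {a b : F} {i : Fin 14} (h : critElim a i i ≠ 0)
    (hi : critPoly a b i = 0) : (derivative (critPoly (C a) X i)).eval b ≠ 0 := by
  rw [critPoly_eq_sum_critCoeff] at hi
  rw [critElim, if_pos rfl] at h
  intro hder
  rw [eval_derivative_critPoly] at hder
  apply h
  rw [discrim]
  linear_combination
    (2 * critCoeff a i 2 * b + critCoeff a i 1) * hder - 4 * critCoeff a i 2 * hi

lemma exists_critPoly_eq_zero [IsAlgClosed F] (h2 : (2 : F) ≠ 0) {a : F} {i : Fin 14}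
    (h : critElim a i i ≠ 0) : ∃ b, critPoly a b i = 0 := by
  rw [critElim, if_pos rfl] at h
  simp only [critPoly_eq_sum_critCoeff]
  by_cases hlead : critCoeff a i 2 = 0
  · have hlin : critCoeff a i 1 ≠ 0 := fun h1 ↦ h (by simp [discrim, hlead, h1])
    exact ⟨-critCoeff a i 0 / critCoeff a i 1, by field_simp; simp [hlead]⟩
  · have : NeZero (2 : F) := ⟨h2⟩
    exact exists_quadratic_eq_zero hlead
      (IsAlgClosed.exists_eq_mul_self _)

/-- The polynomial in `a` whose roots are the parameters to be excluded: at any other `a`, each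
`critPoly a b i` has only simple zeros in `b` and no two of them have a common zero. -/
def exceptional {R : Type*} [CommRing R] (a : R) : R := ∏ i, ∏ j, critElim a i j

lemma critElim_ne_zero_of_exceptional_ne_zero {a : F} (h : exceptional a ≠ 0) (i j : Fin 14) :
    critElim a i j ≠ 0 :=
  Finset.prod_ne_zero_iff.1 (Finset.prod_ne_zero_iff.1 h i (Finset.mem_univ i)) j
    (Finset.mem_univ j)

lemma ne_zero_of_exceptional_ne_zero {a : F} (h : exceptional a ≠ 0) : a ≠ 0 := by
  simpa [critElim, critCoeff, quadraticResultant, quadraticIndices] using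
    critElim_ne_zero_of_exceptional_ne_zero h 0 3

lemma one_sub_ne_zero_of_exceptional_ne_zero {a : F} (h : exceptional a ≠ 0) : 1 - a ≠ 0 := by
  have hcrit : critElim a 1 3 = -(1 - a) := by
    simp [critElim, critCoeff, quadraticResultant, quadraticIndices]
    ring
  exact neg_ne_zero.1 (hcrit ▸ critElim_ne_zero_of_exceptional_ne_zero h 1 3)

/-- Six Gaussian integers, at least one of which is a zero of `critElim · i j` modulo no odd
prime. -/
def gaussianPoints : Finset GaussianInt := {⟨-1, 0⟩, ⟨0, 0⟩, ⟨0, 1⟩, ⟨1, 0⟩, ⟨1, 1⟩, ⟨2, 0⟩}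

lemma exists_norm_critElim_dvd (i j : Fin 14) :
    ∃ z ∈ gaussianPoints, (critElim z i j).norm ∣ 2 ^ 8 := by
  revert i j
  decide +kernel

lemma critElim_X_ne_zero (h2 : (2 : F) ≠ 0) (i j : Fin 14) : critElim (X : F[X]) i j ≠ 0 := by
  obtain ⟨z, -, hz⟩ := exists_norm_critElim_dvd i j
  obtain ⟨r, hr⟩ := IsAlgClosed.exists_eq_mul_self (-1 : AlgebraicClosure F)
  let φ : GaussianInt →+* AlgebraicClosure F := Zsqrtd.lift ⟨r, by rw [← hr]; simp⟩
  have hnorm : φ (critElim z i j).norm ≠ 0 := by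
    have h2' : (2 : AlgebraicClosure F) ≠ 0 := by
      simpa only [map_ofNat] using (map_ne_zero (algebraMap F (AlgebraicClosure F))).2 h2
    refine ne_zero_of_dvd_ne_zero (pow_ne_zero 8 h2') ?_
    simpa only [map_pow, map_ofNat, RingHom.coe_comp, Function.comp_apply, Int.coe_castRingHom]
        using map_dvd (φ.comp (Int.castRingHom GaussianInt)) hz
  have hφ : critElim (φ z) i j ≠ 0 := by
    rw [Zsqrtd.norm_eq_mul_conj, map_mul] at hnorm
    rw [← map_critElim]
    exact left_ne_zero_of_mul hnorm
  intro hX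
  have := map_critElim (eval₂RingHom (algebraMap F (AlgebraicClosure F)) (φ z)) X i j
  rw [hX, map_zero, coe_eval₂RingHom, eval₂_X] at this
  exact hφ this.symm

lemma natDegree_critCoeff_X_le (i : Fin 14) (k : Fin 3) :
    (critCoeff (X : F[X]) i k).natDegree ≤ 2 := by
  fin_cases i <;> fin_cases k <;> simp [critCoeff] <;> compute_degree!

lemma natDegree_critElim_X_le (i j : Fin 14) : (critElim (X : F[X]) i j).natDegree ≤ 8 := by
  have hmul : ∀ k l m n, (critCoeff (X : F[X]) i k * critCoeff (X : F[X]) j l -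
      critCoeff (X : F[X]) i m * critCoeff (X : F[X]) j n).natDegree ≤ 4 := fun k l m n ↦
    natDegree_sub_le_of_le
      (natDegree_mul_le_of_le (natDegree_critCoeff_X_le i k) (natDegree_critCoeff_X_le j l))
      (natDegree_mul_le_of_le (natDegree_critCoeff_X_le i m) (natDegree_critCoeff_X_le j n))
  rw [critElim, quadraticResultant, discrim]
  split_ifs with hij hlin
  · exact (natDegree_sub_le_of_le (natDegree_pow_le_of_le 2 (natDegree_critCoeff_X_le i 1))
      (natDegree_mul_le_of_le (natDegree_mul_le_of_le (natDegree_ofNat 4).le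
        (natDegree_critCoeff_X_le i 2)) (natDegree_critCoeff_X_le i 0))).trans (by norm_num)
  · exact (hmul 1 0 0 1).trans (by norm_num)
  · exact natDegree_sub_le_of_le (natDegree_pow_le_of_le 2 (hmul 2 0 0 2))
      (natDegree_mul_le_of_le (hmul 2 1 1 2) (hmul 1 0 0 1))

lemma card_exceptional_eq_zero_le [Fintype F] (h2 : (2 : F) ≠ 0) :
    (Finset.univ.filter fun a : F ↦ exceptional a = 0).card ≤ 1568 := by
  have hdeg : (exceptional (X : F[X])).natDegree ≤ 1568 := by
    refine (natDegree_prod_le _ _).trans ((Finset.sum_le_card_nsmul _ _ (14 * 8) fun i _ ↦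
      (natDegree_prod_le _ _).trans ?_).trans (by simp))
    exact (Finset.sum_le_card_nsmul _ _ 8 fun j _ ↦ natDegree_critElim_X_le i j).trans (by simp)
  have hne : exceptional (X : F[X]) ≠ 0 :=
    Finset.prod_ne_zero_iff.2 fun i _ ↦
      Finset.prod_ne_zero_iff.2 fun j _ ↦ critElim_X_ne_zero h2 i j
  have heval : ∀ a : F, (exceptional (X : F[X])).eval a = exceptional a := fun a ↦ by
    have hcrit : ∀ i j, (critElim (X : F[X]) i j).eval a = critElim a i j := by
      simpa using map_critElim (evalRingHom a) X
    simp only [exceptional, eval_prod, hcrit]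
  simpa only [heval] using (card_eval_eq_zero_le hne).trans hdeg

lemma not_isConstMulSq_prod_critPoly (h2 : (2 : F) ≠ 0) {a : F} (ha : exceptional a ≠ 0)
    {T : Finset (Fin 14)} (hT : T.Nonempty) :
    ¬ IsConstMulSq (∏ i ∈ T, critPoly (C a) X i) := by
  obtain ⟨i, hi⟩ := hT
  let φ := algebraMap F (AlgebraicClosure F)
  have hφ2 : (2 : AlgebraicClosure F) ≠ 0 := by
    simpa only [map_ofNat] using (map_ne_zero φ).2 h2
  have helim : ∀ j, critElim (φ a) i j ≠ 0 := fun j ↦ by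
    rw [← map_critElim]
    exact (map_ne_zero φ).2 (critElim_ne_zero_of_exceptional_ne_zero ha i j)
  have hmap : ∀ j, (critPoly (C a) X j).map φ = critPoly (C (φ a)) X j := fun j ↦ by
    simpa using map_critPoly (mapRingHom φ) (C a) X j
  obtain ⟨β, hβ⟩ := exists_critPoly_eq_zero hφ2 (helim i)
  refine not_isConstMulSq_prod φ (β := β) hi ?_ ?_ fun j hj ↦ ?_ <;> rw [hmap]
  · rw [eval_critPoly, hβ]
  · exact eval_derivative_critPoly_ne_zero (helim i) hβ
  · rw [eval_critPoly]
    exact critPoly_ne_zero_of_critElim_ne_zero hj.symm (helim j) hβ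

lemma sum_natDegree_critPoly_le (a : F) : ∑ i, (critPoly (C a) X i).natDegree ≤ 18 := by
  have hdeg : ∀ i, (critPoly (C a) X i).natDegree ≤ if i ∈ quadraticIndices then 2 else 1 := by
    intro i
    fin_cases i <;> simp [critPoly, quadraticIndices] <;> compute_degree!
  exact (Finset.sum_le_sum fun i _ ↦ hdeg i).trans (by decide)

lemma card_exists_critPoly_eq_zero_le [Fintype F] (h2 : (2 : F) ≠ 0) {a : F}
    (ha : exceptional a ≠ 0) :
    (Finset.univ.filter fun b : F ↦ ∃ i, critPoly a b i = 0).card ≤ 18 := by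
  have hne : ∏ i, critPoly (C a) X i ≠ 0 := fun h ↦
    not_isConstMulSq_prod_critPoly h2 ha Finset.univ_nonempty ⟨0, 0, by simp [h]⟩
  have hcard := (card_eval_eq_zero_le hne).trans
    ((natDegree_prod_le _ _).trans (sum_natDegree_critPoly_le a))
  simpa [eval_prod, eval_critPoly, Finset.prod_eq_zero_iff] using hcard

lemma not_isConstMulSq_prod_X_one_sub_X {T : Finset (Fin 2)} (hT : T.Nonempty) :
    ¬ IsConstMulSq (∏ i ∈ T, (![X, 1 - X] : Fin 2 → F[X]) i) := by
  obtain ⟨i, hi⟩ := hT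
  refine not_isConstMulSq_prod (RingHom.id F) (β := ![0, 1] i) hi ?_ ?_ fun j ↦ ?_
  · fin_cases i <;> simp
  · fin_cases i <;> simp
  · fin_cases i <;> fin_cases j <;> simp

end Field

end CriticalPolynomials

section SquareClass

variable {F : Type*} [Field F] {x y : F}

/-- The square class of a field element: `true` on squares, including `0`, and `false` on
nonsquares. -/
def sqClass (x : F) : Bool := decide (IsSquare x)

lemma sqClass_eq_true_iff : sqClass x = true ↔ IsSquare x := decide_eq_true_iff

lemma sqClass_neg (hneg : IsSquare (-1 : F)) (x : F) : sqClass (-x) = sqClass x := by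
  rw [Bool.eq_iff_iff, sqClass_eq_true_iff, sqClass_eq_true_iff]
  exact ⟨fun h ↦ by simpa using hneg.mul h, fun h ↦ by simpa using hneg.mul h⟩

lemma quadraticChar_eq_boolSign [Fintype F] (hx : x ≠ 0) :
    (quadraticChar F x : ℝ) = boolSign (sqClass x) := by
  by_cases hs : IsSquare x
  · simp [sqClass, boolSign, hs, (quadraticChar_one_iff_isSquare hx).2 hs]
  · simp [sqClass, boolSign, hs, quadraticChar_neg_one_iff_not_isSquare.2 hs]

variable [Finite F]

lemma sqClass_mul (hx : x ≠ 0) (hy : y ≠ 0) : sqClass (x * y) = (sqClass x == sqClass y) := by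
  have := Fintype.ofFinite F
  have hmul : boolSign (sqClass (x * y)) = boolSign (sqClass x) * boolSign (sqClass y) := by
    rw [← quadraticChar_eq_boolSign hx, ← quadraticChar_eq_boolSign hy,
      ← quadraticChar_eq_boolSign (mul_ne_zero hx hy), map_mul, Int.cast_mul]
  revert hmul
  cases sqClass x <;> cases sqClass y <;> cases sqClass (x * y) <;> norm_num [boolSign]

lemma exists_sqClass_eq (hF : ringChar F ≠ 2) (c : Bool) : ∃ k : F, k ≠ 0 ∧ sqClass k = c := by
  cases c
  · obtain ⟨k, hk⟩ := FiniteField.exists_nonsquare hF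
    exact ⟨k, fun h ↦ hk (h ▸ IsSquare.zero), by simpa [sqClass] using hk⟩
  · exact ⟨1, one_ne_zero, sqClass_eq_true_iff.2 IsSquare.one⟩

lemma mem_SigSet_iff (hxy : x ≠ y) (hx : x ≠ 0) (hx' : 1 - x ≠ 0) (hy : y ≠ 0)
    (hy' : 1 - y ≠ 0) :
    (x, y) ∈ SigSet F ↔ sqClass x = sqClass y ∧ sqClass (1 - x) = sqClass (1 - y) := by
  simp only [SigSet, Set.mem_ofPred_eq, ← sqClass_eq_true_iff, sqClass_mul hx hy,
    sqClass_mul hx' hy', beq_iff_eq, hxy, hx, hy, (sub_ne_zero.1 hx').symm,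
    (sub_ne_zero.1 hy').symm, ne_eq, not_false_eq_true, true_and]

end SquareClass

section Associativity

variable {F : Type*} [Field F]

lemma qop_eq_cond (a b u v : F) : qop a b u v = u + cond (sqClass (v - u)) a b * (v - u) := by
  by_cases h : IsSquare (v - u) <;> simp [qop, sqClass, h]

lemma qop_add_right (a b u v t : F) : qop a b (u + t) (v + t) = qop a b u v + t := by
  rw [qop_eq_cond, qop_eq_cond, add_sub_add_right_eq_sub]
  ring

lemma maxNA_iff_forall_middle_zero (a b : F) : MaxNA a b ↔
    ∀ u w : F, qop a b (qop a b u 0) w = qop a b u (qop a b 0 w) → u = 0 ∧ w = 0 := by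
  constructor
  · intro h u w huw
    exact ⟨(h u 0 w huw).1, (h u 0 w huw).2.symm⟩
  · intro h u v w huvw
    have := h (u - v) (w - v) (add_right_cancel (b := v) (by
      simpa only [← qop_add_right, sub_add_cancel, zero_add] using huvw))
    exact ⟨sub_eq_zero.1 this.1, (sub_eq_zero.1 this.2).symm⟩

/-- The differences whose square classes select the factors in the four products of
`(u * 0) * w` and `u * (0 * w)`, up to sign, provided that these square classes are `c`. -/
def assocDiff (a b : F) (c : Fin 4 → Bool) (u w : F) : Fin 4 → F :=
  ![u, w, w - (1 - cond (c 0) a b) * u, cond (c 1) a b * w - u]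

/-- The differences `assocDiff a b c u w` for the vector `(u, w)` spanning the solutions of
`(u * 0) * w = u * (0 * w)` with factors selected by `c`. -/
def assocSolution (a b : F) (c : Fin 4 → Bool) : Fin 4 → F :=
  assocDiff a b c (cond (c 3) a b * cond (c 1) a b - cond (c 2) a b)
    (cond (c 3) a b - cond (c 0) a b - cond (c 2) a b + cond (c 0) a b * cond (c 2) a b)

/-- The pattern `c` occurs, up to a common change of class, as the square classes of
`assocSolution a b c`; then a multiple of that solution is a nontrivial associative triple. -/
def IsObstruction (a b : F) (c : Fin 4 → Bool) : Prop :=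
  ∀ t, (sqClass (assocSolution a b c t) == sqClass (assocSolution a b c 0)) = (c t == c 0)

lemma assocDiff_mul (a b : F) (c : Fin 4 → Bool) (k u w : F) (t : Fin 4) :
    assocDiff a b c (k * u) (k * w) t = k * assocDiff a b c u w t := by
  fin_cases t <;> simp [assocDiff] <;> ring

lemma qop_assoc_iff (hneg : IsSquare (-1 : F)) {a b u w : F} {c : Fin 4 → Bool}
    (hc : ∀ t, sqClass (assocDiff a b c u w t) = c t) :
    qop a b (qop a b u 0) w = qop a b u (qop a b 0 w) ↔
      u * assocSolution a b c 1 = w * assocSolution a b c 0 := by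
  have hleft : qop a b u 0 = (1 - cond (c 0) a b) * u := by
    rw [qop_eq_cond, zero_sub, sqClass_neg hneg, show sqClass u = c 0 from hc 0]
    ring
  have hright : qop a b 0 w = cond (c 1) a b * w := by
    rw [qop_eq_cond, sub_zero, show sqClass w = c 1 from hc 1, zero_add]
  rw [hleft, hright, qop_eq_cond, qop_eq_cond,
    show sqClass (w - (1 - cond (c 0) a b) * u) = c 2 from hc 2,
    show sqClass (cond (c 1) a b * w - u) = c 3 from hc 3]
  simp only [assocSolution, assocDiff, Matrix.cons_val]
  constructor <;> intro h <;> linear_combination h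

lemma mul_assocSolution (a b : F) (c : Fin 4 → Bool) {u w : F}
    (h : u * assocSolution a b c 1 = w * assocSolution a b c 0) (t : Fin 4) :
    u * assocSolution a b c t = assocDiff a b c u w t * assocSolution a b c 0 := by
  simp only [assocSolution, assocDiff, Matrix.cons_val] at h ⊢
  match t with
  | 0 => simp only [Matrix.cons_val]
  | 1 => simpa only [Matrix.cons_val] using h
  | 2 =>
    simp only [Matrix.cons_val]
    linear_combination h
  | 3 =>
    simp only [Matrix.cons_val]
    linear_combination cond (c 1) a b * h

lemma assocSolution_not (a b : F) (c : Fin 4 → Bool) :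
    assocSolution b a (fun t ↦ !c t) = assocSolution a b c := by
  simp only [assocSolution, assocDiff, Bool.cond_not]

lemma isObstruction_not (a b : F) (c : Fin 4 → Bool) :
    IsObstruction b a (fun t ↦ !c t) ↔ IsObstruction a b c := by
  have hnot : ∀ x y : Bool, ((!x) == !y) = (x == y) := by decide
  simp only [IsObstruction, assocSolution_not, hnot]

variable [Finite F]

lemma isObstruction_of_mul_eq {a b u w : F} {c : Fin 4 → Bool}
    (hsol : ∀ t, assocSolution a b c t ≠ 0) (hu : u ≠ 0)
    (hc : ∀ t, sqClass (assocDiff a b c u w t) = c t)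
    (h : u * assocSolution a b c 1 = w * assocSolution a b c 0) : IsObstruction a b c := by
  intro t
  have hmul := mul_assocSolution a b c h t
  have hdiff : assocDiff a b c u w t ≠ 0 :=
    left_ne_zero_of_mul (hmul ▸ mul_ne_zero hu (hsol t))
  have hclass := congrArg sqClass hmul
  rw [sqClass_mul hu (hsol t), sqClass_mul hdiff (hsol 0), hc, show sqClass u = c 0 from hc 0]
    at hclass
  revert hclass
  cases sqClass (assocSolution a b c t) <;> cases sqClass (assocSolution a b c 0) <;>
    cases c t <;> cases c 0 <;> decide

lemma IsObstruction.exists_assoc (hneg : IsSquare (-1 : F)) (hF : ringChar F ≠ 2) {a b : F}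
    {c : Fin 4 → Bool} (hsol : ∀ t, assocSolution a b c t ≠ 0) (h : IsObstruction a b c) :
    ∃ u w : F, u ≠ 0 ∧ qop a b (qop a b u 0) w = qop a b u (qop a b 0 w) := by
  obtain ⟨k, hk, hclass⟩ := exists_sqClass_eq hF (sqClass (assocSolution a b c 0) == c 0)
  refine ⟨k * assocSolution a b c 0, k * assocSolution a b c 1, mul_ne_zero hk (hsol 0),
    (qop_assoc_iff hneg (c := c) fun t ↦ ?_).2 (by ring)⟩
  have hdiff : assocDiff a b c (k * assocSolution a b c 0) (k * assocSolution a b c 1) t =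
      k * assocSolution a b c t := assocDiff_mul a b c k _ _ t
  rw [hdiff, sqClass_mul hk (hsol t), hclass]
  have ht := h t
  revert ht
  cases sqClass (assocSolution a b c t) <;> cases sqClass (assocSolution a b c 0) <;>
    cases c t <;> cases c 0 <;> decide

lemma maxNA_iff_forall_not_isObstruction (hneg : IsSquare (-1 : F)) (hF : ringChar F ≠ 2)
    {a b : F} (hsol : ∀ c t, assocSolution a b c t ≠ 0) :
    MaxNA a b ↔ ∀ c, ¬ IsObstruction a b c := by
  rw [maxNA_iff_forall_middle_zero]
  constructor
  · intro h c hobs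
    obtain ⟨u, w, hu, huw⟩ := hobs.exists_assoc hneg hF (hsol c)
    exact hu (h u w huw).1
  · intro h u w huw
    let c : Fin 4 → Bool := ![sqClass u, sqClass w, sqClass (w - (1 - cond (sqClass u) a b) * u),
      sqClass (cond (sqClass w) a b * w - u)]
    have hc : ∀ t, sqClass (assocDiff a b c u w t) = c t := by
      intro t
      fin_cases t <;> rfl
    rw [qop_assoc_iff hneg hc] at huw
    have hu : u = 0 := by_contra fun hu ↦ h c (isObstruction_of_mul_eq (hsol c) hu hc huw)
    rw [hu, zero_mul] at huw
    exact ⟨hu, (mul_eq_zero.1 huw.symm).resolve_right (hsol c 0)⟩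

end Associativity

section Criterion

variable {F : Type*} [Field F] {x y : F}

/-- The pair `(x, y)` avoids the degeneracies of the criterion for maximal nonassociativity. -/
structure IsGeneric (x y : F) : Prop where
  left_ne_zero : x ≠ 0
  one_sub_left_ne_zero : 1 - x ≠ 0
  critPoly_ne_zero : ∀ i, critPoly x y i ≠ 0

/-- The permutation of the indices of `critPoly` induced by exchanging the arguments; the
indices `0` and `1` are fixed by convention. -/
def swapIndex : Fin 14 → Fin 14 := ![0, 1, 3, 2, 5, 4, 7, 6, 9, 8, 11, 10, 13, 12]

lemma critPoly_swap (x y : F) {i : Fin 14} (hi₀ : i ≠ 0) (hi₁ : i ≠ 1) :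
    critPoly y x i = critPoly x y (swapIndex i) := by
  fin_cases i <;> first | contradiction | (simp [critPoly, swapIndex] <;> ring)

namespace IsGeneric

lemma right_ne_zero (h : IsGeneric x y) : y ≠ 0 := h.critPoly_ne_zero 0

lemma one_sub_right_ne_zero (h : IsGeneric x y) : 1 - y ≠ 0 := h.critPoly_ne_zero 1

lemma swap (h : IsGeneric x y) : IsGeneric y x where
  left_ne_zero := h.right_ne_zero
  one_sub_left_ne_zero := h.one_sub_right_ne_zero
  critPoly_ne_zero i := by
    rcases eq_or_ne i 0 with rfl | hi₀
    · exact h.left_ne_zero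
    rcases eq_or_ne i 1 with rfl | hi₁
    · exact h.one_sub_left_ne_zero
    · rw [critPoly_swap x y hi₀ hi₁]
      exact h.critPoly_ne_zero _

end IsGeneric

/-- The factorization of `assocSolution x y ![i, j, true, s]` into `critPoly x y`. -/
def factoredSolution (x y : F) : Bool → Bool → Bool → Fin 4 → F
  | true, true, true => ![-(x * (1 - x)), -(x * (1 - x)), -(x * (x * (1 - x))),
      (1 - x) * (x * (1 - x))]
  | true, false, true => ![-(x * (1 - y)), -(x * (1 - x)), -(x * (y * (1 - x))),
      x * critPoly x y 12]
  | false, true, true => ![-(x * (1 - x)), -(y * (1 - x)), (1 - x) * critPoly x y 11,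
      x * ((1 - x) * (1 - y))]
  | false, false, true => ![-(x * (1 - y)), -(y * (1 - x)), critPoly x y 6, critPoly x y 8]
  | true, true, false => ![-(x * (1 - y)), critPoly x y 2, critPoly x y 7,
      x * ((1 - x) * (1 - x))]
  | true, false, false => ![critPoly x y 4, critPoly x y 2, (1 - y) * critPoly x y 10,
      x * critPoly x y 12]
  | false, true, false => ![-(x * (1 - y)), -(x * (1 - y)), -(x * (y * (1 - y))),
      x * ((1 - x) * (1 - y))]
  | false, false, false => ![critPoly x y 4, -(x * (1 - y)), -(y * (y * (1 - y))),
      critPoly x y 8]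

lemma assocSolution_eq_factoredSolution (x y : F) (i j s : Bool) :
    assocSolution x y ![i, j, true, s] = factoredSolution x y i j s := by
  ext t
  cases i <;> cases j <;> cases s <;> fin_cases t <;>
    simp [assocSolution, assocDiff, factoredSolution, critPoly] <;> ring

lemma factoredSolution_ne_zero (h : IsGeneric x y) (i j s : Bool) (t : Fin 4) :
    factoredSolution x y i j s t ≠ 0 := by
  cases i <;> cases j <;> cases s <;> fin_cases t <;>
    simp [factoredSolution, h.left_ne_zero, h.one_sub_left_ne_zero, h.right_ne_zero,
      h.one_sub_right_ne_zero, h.critPoly_ne_zero]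

lemma exists_pattern_or_not (c : Fin 4 → Bool) :
    ∃ i j s, c = ![i, j, true, s] ∨ c = fun t ↦ !(![i, j, true, s] : Fin 4 → Bool) t := by
  revert c
  decide

lemma assocSolution_ne_zero (h : IsGeneric x y) (c : Fin 4 → Bool) (t : Fin 4) :
    assocSolution x y c t ≠ 0 := by
  obtain ⟨i, j, s, rfl | rfl⟩ := exists_pattern_or_not c
  · rw [assocSolution_eq_factoredSolution]
    exact factoredSolution_ne_zero h i j s t
  · rw [assocSolution_not, assocSolution_eq_factoredSolution]
    exact factoredSolution_ne_zero h.swap i j s t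

lemma forall_not_isObstruction_iff (x y : F) :
    (∀ c, ¬ IsObstruction x y c) ↔ (¬ ∃ i j s, IsObstruction x y ![i, j, true, s]) ∧
      ¬ ∃ i j s, IsObstruction y x ![i, j, true, s] := by
  constructor
  · exact fun h ↦ ⟨fun ⟨i, j, s, hobs⟩ ↦ h _ hobs, fun ⟨i, j, s, hobs⟩ ↦
      h _ ((isObstruction_not y x ![i, j, true, s]).2 hobs)⟩
  · rintro ⟨hxy, hyx⟩ c hobs
    obtain ⟨i, j, s, rfl | rfl⟩ := exists_pattern_or_not c
    · exact hxy ⟨i, j, s, hobs⟩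
    · exact hyx ⟨i, j, s, (isObstruction_not y x _).1 hobs⟩

/-- The Boolean test for the existence of an obstruction `c` with `c 2 = true`, in terms of the
common square class `α` of `x` and `y`, the common square class `β` of `1 - x` and `1 - y`, and the
square classes `e i` of `critPoly x y i`. -/
def obstructed (α β : Bool) (e : Fin 14 → Bool) : Bool :=
  (α && β) ||
  ((e 6 != (α == β)) && (e 8 != (α == β))) ||
  (!β && (e 2 == (α == β)) && (e 7 == (α == β))) ||
  ((e 2 != e 4) && ((e 4 == e 10) == β) && ((e 4 == e 12) != α)) ||
  (!α && (e 4 == (α == β)) && (e 4 == e 8))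

variable [Finite F]

set_option synthInstance.maxSize 1000 in
lemma isObstruction_iff (hneg : IsSquare (-1 : F)) (h : IsGeneric x y)
    (hx : sqClass x = sqClass y) (hx' : sqClass (1 - x) = sqClass (1 - y)) :
    (∃ i j s, IsObstruction x y ![i, j, true, s]) ↔
      obstructed (sqClass x) (sqClass (1 - x)) (fun i ↦ sqClass (critPoly x y i)) = true := by
  simp only [IsObstruction, assocSolution_eq_factoredSolution, factoredSolution, obstructed,
    Bool.exists_bool, Fin.forall_fin_succ, IsEmpty.forall_iff, Fin.succ_zero_eq_one,
    Fin.succ_one_eq_two, Fin.reduceSucc, Matrix.cons_val, sqClass_neg hneg, sqClass_mul, ne_eq,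
    mul_eq_zero, or_self, not_false_eq_true, h.left_ne_zero, h.one_sub_left_ne_zero,
    h.right_ne_zero, h.one_sub_right_ne_zero, h.critPoly_ne_zero, ← hx, ← hx',
    beq_self_eq_true, true_and, and_true]
  generalize sqClass x = α, sqClass (1 - x) = β, sqClass (critPoly x y 2) = e₂,
    sqClass (critPoly x y 4) = e₄, sqClass (critPoly x y 6) = e₆, sqClass (critPoly x y 7) = e₇,
    sqClass (critPoly x y 8) = e₈, sqClass (critPoly x y 10) = e₁₀,
    sqClass (critPoly x y 11) = e₁₁, sqClass (critPoly x y 12) = e₁₂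
  revert α β e₂ e₄ e₆ e₇ e₈ e₁₀ e₁₁ e₁₂
  decide +kernel

/-- The Boolean test for maximal nonassociativity of `Q_{x,y}` and `(x, y) ∈ Σ`, in terms of the
square classes `α` of `x`, `β` of `1 - x` and `e i` of `critPoly x y i`. -/
def criterion (α β : Bool) (e : Fin 14 → Bool) : Bool :=
  α == e 0 && β == e 1 && !obstructed α β e && !obstructed α β (e ∘ swapIndex)

theorem mem_SigSet_and_maxNA_iff (hneg : IsSquare (-1 : F)) (hF : ringChar F ≠ 2) (hxy : x ≠ y)
    (h : IsGeneric x y) : (x, y) ∈ SigSet F ∧ MaxNA x y ↔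
      criterion (sqClass x) (sqClass (1 - x)) (fun i ↦ sqClass (critPoly x y i)) = true := by
  rw [mem_SigSet_iff hxy h.left_ne_zero h.one_sub_left_ne_zero h.right_ne_zero
    h.one_sub_right_ne_zero, maxNA_iff_forall_not_isObstruction hneg hF (assocSolution_ne_zero h),
    forall_not_isObstruction_iff]
  simp only [criterion, Bool.and_eq_true, beq_iff_eq, and_assoc, Bool.not_eq_true']
  refine and_congr_right fun hx ↦ and_congr_right fun hx' ↦ ?_
  have hswap : ∀ i, sqClass (critPoly y x i) = sqClass (critPoly x y (swapIndex i)) := by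
    intro i
    rcases eq_or_ne i 0 with rfl | hi₀
    · exact hx
    rcases eq_or_ne i 1 with rfl | hi₁
    · exact hx'
    · rw [critPoly_swap x y hi₀ hi₁]
  rw [isObstruction_iff hneg h hx hx', isObstruction_iff hneg h.swap hx.symm hx'.symm, ← hx, ← hx',
    Bool.not_eq_true, Bool.not_eq_true]
  simp only [hswap]
  rfl

end Criterion

section Counting

/-- Assembles a sign pattern so that `swapIndex` exchanges the last two entries of `p.1`, which
`obstructed` reads off in both orientations, and exchanges the two components of `p.2`. -/
def interlace (p : (Fin 4 → Bool) × (Fin 5 → Bool) × (Fin 5 → Bool)) : Fin 14 → Bool :=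
  ![p.1 0, p.1 1, p.2.1 0, p.2.2 0, p.2.1 1, p.2.2 1, p.1 2, p.1 3, p.2.1 2, p.2.2 2, p.2.1 3,
    p.2.2 3, p.2.1 4, p.2.2 4]

lemma interlace_bijective : Function.Bijective interlace := by
  refine Function.bijective_iff_has_inverse.2 ⟨fun e ↦ (![e 0, e 1, e 6, e 7],
    ![e 2, e 4, e 8, e 10, e 12], ![e 3, e 5, e 9, e 11, e 13]), fun p ↦ ?_, fun e ↦ ?_⟩
  · refine Prod.ext ?_ (Prod.ext ?_ ?_) <;> ext i <;> fin_cases i <;> rfl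
  · ext i
    fin_cases i <;> rfl

/-- The number of unobstructed sign patterns for one orientation of the pair, with prescribed
square classes `γ` and `δ` of the two critical polynomials shared by both orientations. -/
def unobstructedCount (α β γ δ : Bool) : ℕ :=
  ∑ s, (!obstructed α β (interlace (![α, β, γ, δ], s, s))).toNat

/-- The number of sign patterns satisfying `criterion α β`. -/
def criterionCount (α β : Bool) : ℕ := if α && β then 0 else if α || β then 784 else 338

lemma criterion_interlace (α β : Bool) (c : Fin 4 → Bool) (s t : Fin 5 → Bool) :
    criterion α β (interlace (c, s, t)) = ((α == c 0 && β == c 1) &&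
      (!obstructed α β (interlace (![α, β, c 2, c 3], s, s))) &&
      (!obstructed α β (interlace (![α, β, c 3, c 2], t, t)))) := by
  simp only [criterion, obstructed, interlace, swapIndex, Function.comp_apply, Matrix.cons_val]

lemma sum_criterion (α β : Bool) : ∑ e, (criterion α β e).toNat = criterionCount α β := by
  have hand : ∀ p q : Bool, (p && q).toNat = p.toNat * q.toNat := by decide
  calc ∑ e, (criterion α β e).toNat
      = ∑ c, ∑ s, ∑ t, (criterion α β (interlace (c, s, t))).toNat := by
        simp only [← interlace_bijective.sum_comp, Fintype.sum_prod_type]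
    _ = ∑ c : Fin 4 → Bool, (α == c 0 && β == c 1).toNat *
          (unobstructedCount α β (c 2) (c 3) * unobstructedCount α β (c 3) (c 2)) := by
        simp only [criterion_interlace, hand, unobstructedCount, mul_assoc,
          ← Finset.mul_sum, ← Finset.sum_mul]
    _ = criterionCount α β := by
        revert α β
        decide +kernel

end Counting

section Estimate

open Polynomial

lemma abs_sub_le_one_of_mem_Icc {x y : ℝ} (hx : x ∈ Set.Icc 0 1) (hy : y ∈ Set.Icc 0 1) :
    |x - y| ≤ 1 :=
  abs_sub_le_iff.2 ⟨by linarith [hx.2, hy.1], by linarith [hx.1, hy.2]⟩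

variable {F : Type*} [Field F]

/-- The indicator function of the set counted by `sigmaCount`. -/
def sigmaIndicator (a b : F) : ℝ := if (a, b) ∈ SigSet F ∧ MaxNA a b then 1 else 0

lemma sigmaIndicator_mem_Icc (a b : F) : sigmaIndicator a b ∈ Set.Icc 0 1 := by
  unfold sigmaIndicator
  split_ifs <;> simp

/-- The indicator function of `criterion α β`. -/
def criterionIndicator (α β : Bool) (e : Fin 14 → Bool) : ℝ := (criterion α β e).toNat

lemma criterionIndicator_mem_Icc (α β : Bool) (e : Fin 14 → Bool) :
    criterionIndicator α β e ∈ Set.Icc 0 1 := by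
  unfold criterionIndicator
  cases criterion α β e <;> simp

lemma sum_criterionIndicator (α β : Bool) :
    ∑ e, criterionIndicator α β e = criterionCount α β := by
  simp only [criterionIndicator, ← Nat.cast_sum, sum_criterion]

lemma sqrt_sum_criterionIndicator_sq_le (α β : Bool) :
    √(∑ e, criterionIndicator α β e ^ 2) ≤ 28 := by
  have hsq : ∀ e, criterionIndicator α β e ^ 2 = criterionIndicator α β e := by
    intro e
    unfold criterionIndicator
    cases criterion α β e <;> simp
  simp only [hsq, sum_criterionIndicator]
  exact Real.sqrt_le_iff.2 ⟨by norm_num, by cases α <;> cases β <;> norm_num [criterionCount]⟩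

/-- The proportion of sign patterns that satisfy `criterion (e 0) (e 1)`. -/
def criterionDensity (e : Fin 2 → Bool) : ℝ := criterionCount (e 0) (e 1) / 2 ^ 14

lemma criterionDensity_mem_Icc (e : Fin 2 → Bool) : criterionDensity e ∈ Set.Icc 0 1 := by
  unfold criterionDensity
  cases e 0 <;> cases e 1 <;> norm_num [criterionCount]

lemma sum_fin_two_bool (f : (Fin 2 → Bool) → ℝ) :
    ∑ e, f e = f ![true, true] + f ![true, false] + (f ![false, true] + f ![false, false]) := by
  simp only [← (finTwoArrowEquiv Bool).symm.sum_comp, Fintype.sum_prod_type, Fintype.sum_bool,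
    finTwoArrowEquiv_symm_apply]

lemma sum_criterionDensity : (∑ e, criterionDensity e) / 2 ^ 2 = 953 * (2 : ℝ) ^ (-15 : ℤ) := by
  norm_num [sum_fin_two_bool, criterionDensity, criterionCount]

lemma sqrt_sum_criterionDensity_sq_le : √(∑ e, criterionDensity e ^ 2) ≤ 1 :=
  Real.sqrt_le_one.2 (by norm_num [sum_fin_two_bool, criterionDensity, criterionCount])

variable [Fintype F]

lemma sigmaCount_eq_sum : (sigmaCount F : ℝ) = ∑ a : F, ∑ b : F, sigmaIndicator a b := by
  rw [sigmaCount, Set.ncard_eq_toFinset_card', ← Fintype.sum_prod_type']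
  simp only [sigmaIndicator, Finset.sum_boole]
  congr 2
  ext p
  simp

lemma abs_quadraticChar_le_one (x : F) : |(quadraticChar F x : ℝ)| ≤ 1 := by
  rcases eq_or_ne x 0 with rfl | hx
  · simp
  · rw [quadraticChar_eq_boolSign hx]
    cases sqClass x <;> simp [boolSign]

/-- The interpolation of `criterionIndicator` at the quadratic characters of the critical
polynomials; it agrees with `sigmaIndicator` at generic pairs. -/
def interpolatedIndicator (a b : F) : ℝ :=
  multilinearExt (criterionIndicator (sqClass a) (sqClass (1 - a)))
    (fun i ↦ quadraticChar F (critPoly a b i))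

lemma abs_sigmaIndicator_sub_interpolatedIndicator_le_one (a b : F) :
    |sigmaIndicator a b - interpolatedIndicator a b| ≤ 1 :=
  abs_sub_le_one_of_mem_Icc (sigmaIndicator_mem_Icc a b)
    (multilinearExt_mem_Icc (criterionIndicator_mem_Icc _ _) fun _ ↦ abs_quadraticChar_le_one _)

lemma sigmaIndicator_eq_interpolatedIndicator (hneg : IsSquare (-1 : F)) (hF : ringChar F ≠ 2)
    {a b : F} (hab : a ≠ b) (h : IsGeneric a b) :
    sigmaIndicator a b = interpolatedIndicator a b := by
  simp only [interpolatedIndicator, quadraticChar_eq_boolSign (h.critPoly_ne_zero _),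
    multilinearExt_boolSign, sigmaIndicator, criterionIndicator,
    mem_SigSet_and_maxNA_iff hneg hF hab h]
  split_ifs with hcrit <;> simp [hcrit]

lemma abs_sum_sigmaIndicator_sub_interpolatedIndicator_le (hneg : IsSquare (-1 : F))
    (hF : ringChar F ≠ 2) {a : F} (ha : exceptional a ≠ 0) :
    |∑ b, sigmaIndicator a b - ∑ b, interpolatedIndicator a b| ≤ 19 := by
  have hterm : ∀ b : F, |sigmaIndicator a b - interpolatedIndicator a b| ≤
      (if ∃ i, critPoly a b i = 0 then 1 else 0) + (if a = b then 1 else 0) := by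
    intro b
    have hone := abs_sigmaIndicator_sub_interpolatedIndicator_le_one a b
    by_cases hzero : ∃ i, critPoly a b i = 0
    · rw [if_pos hzero]
      exact hone.trans (le_add_of_nonneg_right (by positivity))
    by_cases hab : a = b
    · rwa [if_neg hzero, if_pos hab, zero_add]
    have hgen : IsGeneric a b := ⟨ne_zero_of_exceptional_ne_zero ha,
      one_sub_ne_zero_of_exceptional_ne_zero ha, fun i hi ↦ hzero ⟨i, hi⟩⟩
    simp [sigmaIndicator_eq_interpolatedIndicator hneg hF hab hgen, hzero, hab]
  have hcard : ((Finset.univ.filter fun b ↦ ∃ i, critPoly a b i = 0).card : ℝ) ≤ 18 := by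
    exact_mod_cast card_exists_critPoly_eq_zero_le (Ring.two_ne_zero hF) ha
  rw [← Finset.sum_sub_distrib]
  refine (Finset.abs_sum_le_sum_abs _ _).trans
    ((Finset.sum_le_sum fun b _ ↦ hterm b).trans ?_)
  rw [Finset.sum_add_distrib, Finset.sum_boole, Fintype.sum_ite_eq]
  linarith

lemma abs_sum_interpolatedIndicator_sub_le (hF : ringChar F ≠ 2) {a : F}
    (ha : exceptional a ≠ 0) :
    |∑ b, interpolatedIndicator a b -
        Fintype.card F * criterionDensity ![sqClass a, sqClass (1 - a)]| ≤
      1820 * √(Fintype.card F) := by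
  have hsum := abs_sum_multilinearExt_quadraticChar_sub_le hF (sum_natDegree_critPoly_le a)
    (fun _ hT ↦ not_isConstMulSq_prod_critPoly (Ring.two_ne_zero hF) ha hT)
    (criterionIndicator (sqClass a) (sqClass (1 - a)))
  simp only [eval_critPoly, sum_criterionIndicator, Fintype.card_fin] at hsum
  calc |∑ b, interpolatedIndicator a b -
        Fintype.card F * criterionDensity ![sqClass a, sqClass (1 - a)]|
      ≤ (3 * (18 : ℕ) + 11) * √(Fintype.card F) *
          √(∑ e, criterionIndicator (sqClass a) (sqClass (1 - a)) e ^ 2) := hsum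
    _ ≤ (3 * (18 : ℕ) + 11) * √(Fintype.card F) * 28 := by
        gcongr
        exact sqrt_sum_criterionIndicator_sq_le _ _
    _ = 1820 * √(Fintype.card F) := by
        push_cast
        ring

/-- The interpolation of `criterionDensity` at the quadratic characters of `a` and `1 - a`. -/
def interpolatedDensity (a : F) : ℝ :=
  multilinearExt criterionDensity
    (fun i ↦ quadraticChar F (((![X, 1 - X] : Fin 2 → F[X]) i).eval a))

lemma interpolatedDensity_mem_Icc (a : F) : interpolatedDensity a ∈ Set.Icc 0 1 :=
  multilinearExt_mem_Icc criterionDensity_mem_Icc fun _ ↦ abs_quadraticChar_le_one _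

lemma interpolatedDensity_eq {a : F} (ha : a ≠ 0) (ha' : 1 - a ≠ 0) :
    interpolatedDensity a = criterionDensity ![sqClass a, sqClass (1 - a)] := by
  rw [← multilinearExt_boolSign criterionDensity, interpolatedDensity]
  congr 1
  ext i
  fin_cases i
  · simpa [-quadraticChar_apply] using quadraticChar_eq_boolSign ha
  · simpa [-quadraticChar_apply] using quadraticChar_eq_boolSign ha'

lemma abs_sum_interpolatedDensity_sub_le (hF : ringChar F ≠ 2) :
    |∑ a : F, interpolatedDensity a - Fintype.card F * (953 * (2 : ℝ) ^ (-15 : ℤ))| ≤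
      17 * √(Fintype.card F) := by
  have hdeg : ∑ i, ((![X, 1 - X] : Fin 2 → F[X]) i).natDegree ≤ 2 := by
    have h : (1 - X : F[X]).natDegree ≤ 1 := by compute_degree
    simpa [Fin.sum_univ_two] using Nat.add_le_add_left h 1
  have hsum := abs_sum_multilinearExt_quadraticChar_sub_le hF hdeg
    (fun _ hT ↦ not_isConstMulSq_prod_X_one_sub_X hT) criterionDensity
  rw [Fintype.card_fin, sum_criterionDensity] at hsum
  calc |∑ a : F, interpolatedDensity a - Fintype.card F * (953 * (2 : ℝ) ^ (-15 : ℤ))|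
      ≤ (3 * (2 : ℕ) + 11) * √(Fintype.card F) * √(∑ e, criterionDensity e ^ 2) := hsum
    _ ≤ (3 * (2 : ℕ) + 11) * √(Fintype.card F) * 1 := by
        gcongr
        exact sqrt_sum_criterionDensity_sq_le
    _ = 17 * √(Fintype.card F) := by
        push_cast
        ring

lemma abs_sum_sigmaIndicator_sub_le (hneg : IsSquare (-1 : F)) (hF : ringChar F ≠ 2) (a : F) :
    |∑ b, sigmaIndicator a b - Fintype.card F * interpolatedDensity a| ≤
      1820 * √(Fintype.card F) + 19 + Fintype.card F * if exceptional a = 0 then 1 else 0 := by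
  by_cases ha : exceptional a = 0
  · have htriv : |∑ b, sigmaIndicator a b - Fintype.card F * interpolatedDensity a| ≤
        Fintype.card F :=
      calc |∑ b, sigmaIndicator a b - Fintype.card F * interpolatedDensity a|
          = |∑ b, (sigmaIndicator a b - interpolatedDensity a)| := by simp
        _ ≤ ∑ b, |sigmaIndicator a b - interpolatedDensity a| := Finset.abs_sum_le_sum_abs _ _
        _ ≤ ∑ _b : F, 1 := Finset.sum_le_sum fun b _ ↦
            abs_sub_le_one_of_mem_Icc (sigmaIndicator_mem_Icc a b) (interpolatedDensity_mem_Icc a)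
        _ = Fintype.card F := by simp
    rw [if_pos ha, mul_one]
    exact htriv.trans (le_add_of_nonneg_left (by positivity))
  · rw [if_neg ha, mul_zero, add_zero, interpolatedDensity_eq (ne_zero_of_exceptional_ne_zero ha)
      (one_sub_ne_zero_of_exceptional_ne_zero ha)]
    refine (abs_sub_le _ (∑ b, interpolatedIndicator a b) _).trans ?_
    linarith [abs_sum_sigmaIndicator_sub_interpolatedIndicator_le hneg hF ha,
      abs_sum_interpolatedIndicator_sub_le hF ha]

lemma abs_sigmaCount_sub_sum_interpolatedDensity_le (hneg : IsSquare (-1 : F))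
    (hF : ringChar F ≠ 2) :
    |(sigmaCount F : ℝ) - Fintype.card F * ∑ a : F, interpolatedDensity a| ≤
      Fintype.card F * (1820 * √(Fintype.card F) + 1587) := by
  have hcard : ((Finset.univ.filter fun a : F ↦ exceptional a = 0).card : ℝ) ≤ 1568 := by
    exact_mod_cast card_exceptional_eq_zero_le (Ring.two_ne_zero hF)
  rw [sigmaCount_eq_sum, Finset.mul_sum, ← Finset.sum_sub_distrib]
  calc |∑ a : F, (∑ b, sigmaIndicator a b - Fintype.card F * interpolatedDensity a)|
      ≤ ∑ a : F, |∑ b, sigmaIndicator a b - Fintype.card F * interpolatedDensity a| :=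
        Finset.abs_sum_le_sum_abs _ _
    _ ≤ ∑ a : F, (1820 * √(Fintype.card F) + 19 +
          Fintype.card F * if exceptional a = 0 then 1 else 0) :=
        Finset.sum_le_sum fun a _ ↦ abs_sum_sigmaIndicator_sub_le hneg hF a
    _ = Fintype.card F * (1820 * √(Fintype.card F) + 19 +
          (Finset.univ.filter fun a : F ↦ exceptional a = 0).card) := by
        rw [Finset.sum_add_distrib, ← Finset.mul_sum, Finset.sum_boole, Finset.sum_const,
          Finset.card_univ, nsmul_eq_mul, ← mul_add]
    _ ≤ Fintype.card F * (1820 * √(Fintype.card F) + 1587) :=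
        mul_le_mul_of_nonneg_left (by linarith) (Nat.cast_nonneg _)

theorem abs_sigmaCount_sub_le (hneg : IsSquare (-1 : F)) (hF : ringChar F ≠ 2) :
    |(sigmaCount F : ℝ) - 953 * (2 : ℝ) ^ (-15 : ℤ) * Fintype.card F ^ 2| ≤
      1837 * (Fintype.card F * √(Fintype.card F)) + 1587 * Fintype.card F := by
  have hmain : |Fintype.card F * ∑ a : F, interpolatedDensity a -
      953 * (2 : ℝ) ^ (-15 : ℤ) * Fintype.card F ^ 2| ≤
      Fintype.card F * (17 * √(Fintype.card F)) := by
    rw [show 953 * (2 : ℝ) ^ (-15 : ℤ) * (Fintype.card F : ℝ) ^ 2 =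
      Fintype.card F * (Fintype.card F * (953 * (2 : ℝ) ^ (-15 : ℤ))) by ring, ← mul_sub, abs_mul,
      Nat.abs_cast]
    gcongr
    exact abs_sum_interpolatedDensity_sub_le hF
  refine (abs_sub_le _ (Fintype.card F * ∑ a : F, interpolatedDensity a) _).trans ?_
  linarith [abs_sigmaCount_sub_sum_interpolatedDensity_le hneg hF]

end Estimate

/-- Theorem 5.3: for `q ≡ 1 (mod 4)`,
`|σ(q) - 953·2⁻¹⁵·q²| < 2518·q^{3/2} + 2623·q`. -/
theorem sigma_estimate_one_mod_four (F : Type*) [Field F] [Fintype F]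
    (q : ℕ) (hq : Fintype.card F = q) (h1 : q % 4 = 1) :
    |(sigmaCount F : ℝ) - 953 * (2 : ℝ) ^ (-15 : ℤ) * (q : ℝ) ^ 2|
      < 2518 * (q : ℝ) ^ ((3 : ℝ) / 2) + 2623 * (q : ℝ) := by
  subst hq
  have hneg : IsSquare (-1 : F) := FiniteField.isSquare_neg_one_iff.2 (by omega)
  have hF : ringChar F ≠ 2 := fun h ↦ by
    have := FiniteField.even_card_of_char_two h
    omega
  have hpos : (0 : ℝ) < Fintype.card F := Nat.cast_pos.2 Fintype.card_pos
  have hpow : (Fintype.card F : ℝ) ^ ((3 : ℝ) / 2) = Fintype.card F * √(Fintype.card F) := by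
    rw [show (3 : ℝ) / 2 = 1 + 1 / 2 by norm_num, Real.rpow_add hpos, Real.rpow_one,
      ← Real.sqrt_eq_rpow]
  have hprod : 0 ≤ Fintype.card F * √(Fintype.card F) := by positivity
  rw [hpow]
  linarith [abs_sigmaCount_sub_le hneg hF]
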